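/- arXiv:2009.05937 — 2 statements merged into one kernel-verified Lean document; each statement's English description precedes it below -/
import Mathlib

section
/- Let m ≥ 4 be an integer and q = 2^m. Let f : F_{q²} → F_{q²} be given by f(x) = x^{3q} + a₁x^{2q+1} + a₂x^{q+2} + a₃x³ where a₁, a₂, a₃ ∈ F_{q²}. If f is APN, then f is affine equivalent to G₁(x) = x³ or f is affine equivalent to G₂(x) = x^{2^{m-1}+1}. -/
/-- `f` is almost perfect nonlinear (APN): for every `a ≠ 0` and every `b`, the equation
`f (x + a) + f x = b` has at most two solutions `x`. -/
def IsAPN {F : Type*} [Field F] (f : F → F) : Prop :=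
  ∀ a : F, a ≠ 0 → ∀ b : F, {x : F | f (x + a) + f x = b}.ncard ≤ 2

/-- `L` is an affine permutation: it is bijective and `x ↦ L x - L 0` is additive
(over a field of characteristic 2, additive maps are exactly the `𝔽₂`-linear ones). -/
def IsAffinePerm {F : Type*} [Field F] (L : F → F) : Prop :=
  Function.Bijective L ∧ ∀ x y : F, L (x + y) + L 0 = L x + L y

/-- `f` and `g` are affine equivalent: `g = L₁ ∘ f ∘ L₂` for affine permutations `L₁, L₂`. -/
def AffEquiv {F : Type*} [Field F] (f g : F → F) : Prop :=
  ∃ L₁ L₂ : F → F, IsAffinePerm L₁ ∧ IsAffinePerm L₂ ∧ ∀ x : F, g x = L₁ (f (L₂ x))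

/-!
Put `q = 2 ^ m` and `σ x = x ^ q`. Then `f x` is the binary cubic `∑ cᵢ X^{3-i} Y^i` evaluated at
`(x, σ x)`, and the bijections `x ↦ a x + b σ(x)` act on it by linear substitutions. The argument
uses the covariants of the pencil spanned by this cubic and its conjugate. Since `f` is quadratic,
it is APN exactly when its polar form vanishes on no pair other than the unavoidable ones.

* If the second transvectant of the pencil vanished at a point `(x, σ x)`, then suitable coordinates
  over `𝔽_q` would remove a mixed term of `f`, and the polar form would have a nontrivial zero.
* The transvectant is a quadratic form fixed up to a swap by `σ`, so it has a root `(1, v)`. By the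
  first point `v σ(v) ≠ 1`, and the bijection `x ↦ x + σ(v) σ(x)` moves the root to `(1, 0)`.
* In this normal form, every `v` with `v σ(v) = 1` that is not a zero of the Jacobian of the pencil
  gives a nontrivial zero of the polar form unless `v` satisfies a trace condition. The Jacobian is
  the square of a quadratic, so the condition holds for all but two `v`; comparing power sums over
  these `v` forces all minors of the pencil but one to vanish. Then `f` is `c₀ x³ + c₃ σ(x³)` or
  `c₁ x² σ(x) + c₂ σ(x² σ(x))`, and `x² σ(x)` is the square of `x ^ (2 ^ (m - 1) + 1)`.
-/

namespace KimAPN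

open Finset Function

variable {K : Type*} [Field K]

section TruncatedTrace

/-- The truncated trace `x + x² + x⁴ + ⋯ + x^{2^{m-1}}`. On a field with `2 ^ m` elements it is the
absolute trace. On `𝔽_{q²}` with `q = 2 ^ m` it restricts to the absolute trace of `𝔽_q`, but it is
also evaluated outside `𝔽_q`, where its values need not lie in `𝔽₂`. -/
def truncTrace (m : ℕ) (x : K) : K := ∑ i ∈ range m, x ^ 2 ^ i

variable [CharP K 2] {m : ℕ}

lemma truncTrace_add (x y : K) : truncTrace m (x + y) = truncTrace m x + truncTrace m y := by
  simp only [truncTrace, ← sum_add_distrib]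
  exact sum_congr rfl fun i _ => add_pow_char_pow x y 2 i

lemma truncTrace_sq (x : K) : truncTrace m (x ^ 2) = truncTrace m x ^ 2 := by
  simp only [truncTrace, CharTwo.sum_sq, ← pow_mul, mul_comm]

lemma truncTrace_sq_add_self (x : K) : truncTrace m (x ^ 2 + x) = x ^ 2 ^ m + x := by
  have htelescope := sum_range_sub (fun i => x ^ 2 ^ i) m
  simp only [CharTwo.sub_eq_add, pow_zero, pow_one] at htelescope
  rw [← htelescope]
  exact sum_congr rfl fun i _ => by rw [add_pow_char_pow, ← pow_mul, ← pow_succ']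

lemma sq_truncTrace_add_self (x : K) :
    truncTrace m x ^ 2 + truncTrace m x = x ^ 2 ^ m + x := by
  rw [← truncTrace_sq, ← truncTrace_add, truncTrace_sq_add_self]

omit [CharP K 2] in
lemma truncTrace_two_mul {σ : K →+* K} (hσ : ∀ x, σ x = x ^ 2 ^ m) (x : K) :
    truncTrace (2 * m) x = truncTrace m x + truncTrace m (σ x) := by
  simp only [truncTrace, two_mul, sum_range_add, hσ, ← pow_mul, ← pow_add]

lemma finrank_ker_sq_add_self_le [Algebra (ZMod 2) K] (φ : K →ₗ[ZMod 2] K)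
    (hφ : ∀ t, φ t = t ^ 2 + t) : Module.finrank (ZMod 2) (LinearMap.ker φ) ≤ 1 := by
  have hker : LinearMap.ker φ ≤ Submodule.span (ZMod 2) {1} := by
    intro t ht
    rw [LinearMap.mem_ker, hφ] at ht
    have hroots : t * (t + 1) = 0 := by linear_combination ht
    rcases mul_eq_zero.mp hroots with rfl | h
    · exact zero_mem _
    · rw [CharTwo.add_eq_zero.mp h]
      exact Submodule.mem_span_singleton_self 1
  exact (Submodule.finrank_mono hker).trans_eq (finrank_span_singleton one_ne_zero)

/-- Additive Hilbert 90 over `𝔽₂`: the image of `t ↦ t² + t` lies in the kernel of the trace, and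
both have codimension one. -/
lemma exists_sq_add_self_eq [Fintype K] {n : ℕ} (hcard : Fintype.card K = 2 ^ n) {r : K}
    (hr : truncTrace n r = 0) : ∃ t : K, t ^ 2 + t = r := by
  let _ : Algebra (ZMod 2) K := ZMod.algebra K 2
  let φ : K →ₗ[ZMod 2] K := ((frobenius K 2).toAddMonoidHom + AddMonoidHom.id K).toZModLinearMap 2
  let Tr := Algebra.trace (ZMod 2) K
  have hφ (t : K) : φ t = t ^ 2 + t := rfl
  have hfinrank : Module.finrank (ZMod 2) K = n := by
    refine Nat.pow_right_injective le_rfl ?_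
    simpa [← hcard] using (Module.card_eq_pow_finrank (K := ZMod 2) (V := K)).symm
  have htrace (x : K) : x ∈ LinearMap.ker Tr ↔ truncTrace n x = 0 := by
    rw [LinearMap.mem_ker, ← map_eq_zero (algebraMap (ZMod 2) K),
      FiniteField.algebraMap_trace_eq_sum_pow, hfinrank]
    simp [truncTrace]
  have hrange : LinearMap.range φ ≤ LinearMap.ker Tr := by
    rintro _ ⟨t, rfl⟩
    rw [htrace, hφ, truncTrace_sq_add_self, ← hcard, FiniteField.pow_card,
      CharTwo.add_self_eq_zero]
  have hTr : Module.finrank (ZMod 2) (LinearMap.range Tr) = 1 := by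
    rw [LinearMap.range_eq_top.mpr (Algebra.trace_surjective _ _), finrank_top,
      Module.finrank_self]
  have hker := finrank_ker_sq_add_self_le φ hφ
  have hdimφ := φ.finrank_range_add_finrank_ker
  have hdimTr := Tr.finrank_range_add_finrank_ker
  rw [← htrace, ← Submodule.eq_of_le_of_finrank_le hrange (by lia)] at hr
  exact hr

end TruncatedTrace

section Conjugation

variable {m : ℕ} {σ : K →+* K}

lemma conj_eq_self_of_sq [CharP K 2] {s : K} (hs : σ (s ^ 2) = s ^ 2) : σ s = s :=
  CharTwo.sq_injective (by simpa only [map_pow] using hs)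

lemma exists_sq_eq [Finite K] [CharP K 2] (x : K) : ∃ s : K, s ^ 2 = x := by
  obtain ⟨s, rfl⟩ := isSquare_of_charTwo' x
  exact ⟨s, sq s⟩

lemma exists_conj_eq_mul [CharP K 2] {v : K} (hv : v * σ v = 1) : ∃ x : K, x ≠ 0 ∧ σ x = v * x := by
  by_cases h1 : v = 1
  · exact ⟨1, one_ne_zero, by rw [h1, map_one, mul_one]⟩
  have hσσv : σ v * σ (σ v) = 1 := by rw [← map_mul, hv, map_one]
  refine ⟨1 + σ v, fun h => h1 ?_, ?_⟩
  · rwa [← CharTwo.add_eq_zero.mp h, mul_one] at hv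
  · rw [map_add, map_one]
    linear_combination v * hσσv - σ (σ v) * hv - hv

variable [Fintype K] (hcard : Fintype.card K = 2 ^ (2 * m)) (hσ : ∀ x, σ x = x ^ 2 ^ m)
include hcard hσ

lemma conj_involutive : Involutive σ := fun x => by
  rw [hσ, hσ, ← pow_mul, ← pow_add, ← two_mul, ← hcard, FiniteField.pow_card]

lemma exists_conj_ne_self : ∃ t : K, σ t ≠ t := by
  by_contra! hfix
  have hpow : ∀ x : Kˣ, x ^ (2 ^ m - 1) = 1 := fun x => by
    refine mul_right_cancel (b := x) (Units.ext ?_)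
    rw [← pow_succ, Nat.sub_add_cancel Nat.one_le_two_pow, one_mul, Units.val_pow_eq_pow_val,
      ← hσ, hfix]
  have hm : m ≠ 0 := by
    rintro rfl
    exact Fintype.one_lt_card.ne' hcard
  have hlt : 2 ^ m < Fintype.card K := hcard ▸ Nat.pow_lt_pow_right one_lt_two (by lia)
  have hone : 1 < 2 ^ m := Nat.one_lt_two_pow hm
  have hdvd := Nat.le_of_dvd (by lia) ((FiniteField.forall_pow_eq_one_iff K _).mp hpow)
  lia

lemma exists_conj_eq_self_ne_zero_ne_one (hm : 2 ≤ m) : ∃ t : K, σ t = t ∧ t ≠ 0 ∧ t ≠ 1 := by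
  by_contra! hfix
  have hnorm : ∀ x : Kˣ, x ^ (2 ^ m + 1) = 1 := fun x => by
    refine Units.ext ?_
    rw [Units.val_pow_eq_pow_val, Units.val_one, pow_succ, ← hσ]
    refine hfix _ ?_ (mul_ne_zero ((map_ne_zero σ).mpr x.ne_zero) x.ne_zero)
    rw [map_mul, conj_involutive hcard hσ, mul_comm]
  have hdvd := Nat.le_of_dvd (by positivity) ((FiniteField.forall_pow_eq_one_iff K _).mp hnorm)
  have hq : 2 ^ 2 ≤ 2 ^ m := Nat.pow_le_pow_right two_pos hm
  rw [hcard, two_mul, pow_add] at hdvd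
  nlinarith [Nat.sub_add_cancel (Nat.one_le_two_pow.trans (Nat.le_mul_self (2 ^ m)))]

/-- `T = truncTrace m r` satisfies `T² + T = y² + y`, so it is `y` or `y + 1`; in the first case
the roots `z` of `z² + z = r` satisfy `σ z = z + y`. -/
lemma exists_sq_add_self_eq_and_conj_eq_add [CharP K 2] {r y : K} (hy : σ y = y)
    (hr : σ r = r + (y ^ 2 + y)) (hT : truncTrace m r ≠ y + 1) :
    ∃ z : K, z ^ 2 + z = r ∧ σ z = z + y := by
  have hTy : truncTrace m r = y := by
    have hsq := sq_truncTrace_add_self (m := m) r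
    rw [← hσ, hr] at hsq
    have hmul : (truncTrace m r + y) * (truncTrace m r + (y + 1)) = 0 := by grind
    exact CharTwo.add_eq_zero.mp
      ((mul_eq_zero.mp hmul).resolve_right fun h => hT (CharTwo.add_eq_zero.mp h))
  obtain ⟨z, hz⟩ := exists_sq_add_self_eq hcard (r := r) <| by
    rw [truncTrace_two_mul hσ, hr, truncTrace_add, truncTrace_sq_add_self, ← hσ, hy,
      CharTwo.add_self_eq_zero, add_zero, CharTwo.add_self_eq_zero]
  refine ⟨z, hz, ?_⟩
  rw [← hTy, ← hz, truncTrace_sq_add_self, hσ, add_comm, CharTwo.add_cancel_right]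

end Conjugation

section PowerSums

lemma two_pow_cases (i : ℕ) :
    i = 0 ∧ (2 : ℤ) ^ i = 1 ∨ i = 1 ∧ (2 : ℤ) ^ i = 2 ∨ i = 2 ∧ (2 : ℤ) ^ i = 4 ∨
      3 ≤ i ∧ 8 ∣ (2 : ℤ) ^ i := by
  rcases i with _ | _ | _ | i
  · simp
  · simp
  · simp
  · exact Or.inr (Or.inr (Or.inr ⟨by lia, pow_dvd_pow 2 (by lia : 3 ≤ i + 3)⟩))

lemma two_mul_two_pow_eq_or_four_mul_le {i m : ℕ} (h : i < m) :
    2 * (2 : ℤ) ^ i = 2 ^ m ∨ 4 * (2 : ℤ) ^ i ≤ 2 ^ m := by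
  rcases (Nat.succ_le_of_lt h).eq_or_lt with rfl | h'
  · exact Or.inl (pow_succ' 2 i).symm
  · refine Or.inr ?_
    calc 4 * (2 : ℤ) ^ i = 2 ^ (i + 2) := by ring
      _ ≤ 2 ^ m := pow_le_pow_right₀ one_le_two h'

lemma dvd_iff_of_abs_lt_two_mul {N k : ℤ} (hk : |k| < 2 * N) :
    N ∣ k ↔ k = -N ∨ k = 0 ∨ k = N := by
  refine ⟨?_, by rintro (rfl | rfl | rfl) <;> simp⟩
  rintro ⟨c, rfl⟩
  have hN : 0 < N := by linarith [abs_nonneg (N * c)]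
  rw [abs_mul, abs_of_pos hN, mul_comm, mul_lt_mul_iff_left₀ hN, abs_lt] at hk
  obtain rfl | rfl | rfl : c = -1 ∨ c = 0 ∨ c = 1 := by lia
  all_goals simp

lemma mul_sum_zpow_eq_zero_of_quadratic {ι : Type*} [Fintype ι] {z R : ι → K} (hz : ∀ x, z x ≠ 0)
    {s₀ s₁ s₂ : K} {j : ℤ} (h : ∀ x, (s₀ + s₁ * z x + s₂ * z x ^ 2) * R x = 0)
    (h₀ : ∑ x, z x ^ j * R x = 0) (h₁ : ∑ x, z x ^ (j + 1) * R x = 0) :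
    s₂ * ∑ x, z x ^ (j + 2) * R x = 0 := by
  have hsum : ∑ x, z x ^ j * ((s₀ + s₁ * z x + s₂ * z x ^ 2) * R x) =
      s₀ * ∑ x, z x ^ j * R x + s₁ * ∑ x, z x ^ (j + 1) * R x +
        s₂ * ∑ x, z x ^ (j + 2) * R x := by
    simp only [mul_sum, ← sum_add_distrib, zpow_add₀ (hz _), zpow_ofNat]
    exact sum_congr rfl fun x _ => by ring
  simpa only [h, h₀, h₁, mul_zero, sum_const_zero, zero_add, eq_comm] using hsum

variable [Fintype K] [DecidableEq K]

lemma sum_units_zpow (k : ℤ) :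
    ∑ x : Kˣ, (x : K) ^ k = if (Fintype.card K : ℤ) - 1 ∣ k then -1 else 0 := by
  have hunits : (Fintype.card Kˣ : ℤ) = Fintype.card K - 1 := by
    rw [Fintype.card_units, Nat.cast_sub Fintype.card_pos, Nat.cast_one]
  obtain ⟨n, hn⟩ := Int.eq_ofNat_of_zero_le
    (Int.emod_nonneg k (Nat.cast_ne_zero.mpr (Fintype.card_ne_zero (α := Kˣ))))
  have hpow (x : Kˣ) : (x : K) ^ k = (x ^ n : Kˣ) := by
    rw [← Units.val_zpow_eq_zpow_val, ← zpow_mod_card, hn, zpow_natCast]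
  have hdvd : Fintype.card K - 1 ∣ n ↔ (Fintype.card K : ℤ) - 1 ∣ k := by
    rw [← Fintype.card_units, ← hunits, ← Int.natCast_dvd_natCast, ← hn,
      EuclideanDomain.dvd_mod_iff dvd_rfl]
  simp only [hpow, ← hdvd]
  exact FiniteField.sum_pow_units K n

variable {d : ℕ} {N : ℤ} (hdN : d * N = Fintype.card K - 1)
include hdN

lemma sum_units_pow_zpow (k : ℤ) :
    ∑ x : Kˣ, ((x : K) ^ d) ^ k = if N ∣ k then -1 else 0 := by
  have hd : (d : ℤ) ≠ 0 := by
    rintro h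
    have := Fintype.one_lt_card (α := K)
    simp only [h, zero_mul] at hdN
    lia
  simp only [← zpow_natCast, ← zpow_mul, sum_units_zpow, ← hdN, mul_dvd_mul_iff_left hd]

variable [CharP K 2] {m : ℕ}

lemma sum_units_zpow_mul_truncTrace (a : K) (j e : ℤ) :
    ∑ x : Kˣ, ((x : K) ^ d) ^ j * truncTrace m (a * ((x : K) ^ d) ^ e) =
      ∑ i ∈ range m, if N ∣ j + e * 2 ^ i then a ^ 2 ^ i else 0 := by
  simp only [truncTrace, mul_sum]
  rw [sum_comm]
  refine sum_congr rfl fun i _ => ?_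
  have hterm (x : Kˣ) : ((x : K) ^ d) ^ j * (a * ((x : K) ^ d) ^ e) ^ 2 ^ i =
      a ^ 2 ^ i * ((x : K) ^ d) ^ (j + e * 2 ^ i) := by
    rw [zpow_add₀ (pow_ne_zero d x.ne_zero), zpow_mul, mul_pow, mul_left_comm]
    norm_cast
  simp only [hterm, ← mul_sum, sum_units_pow_zpow hdN, CharTwo.neg_eq, mul_ite, mul_one, mul_zero]

lemma sum_units_zpow_mul_truncTrace_eq_zero (a : K) {j e : ℤ}
    (h : ∀ i < m, ¬N ∣ j + e * 2 ^ i) :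
    ∑ x : Kˣ, ((x : K) ^ d) ^ j * truncTrace m (a * ((x : K) ^ d) ^ e) = 0 := by
  rw [sum_units_zpow_mul_truncTrace hdN]
  exact sum_eq_zero fun i hi => if_neg (h i (mem_range.mp hi))

lemma sum_units_zpow_mul_truncTrace_eq_ite (a : K) {j e : ℤ} {p : Prop} [Decidable p] {i₀ : ℕ}
    (hi₀ : i₀ < m) (h : ∀ i < m, N ∣ j + e * 2 ^ i ↔ p ∧ i = i₀) :
    ∑ x : Kˣ, ((x : K) ^ d) ^ j * truncTrace m (a * ((x : K) ^ d) ^ e) =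
      if p then a ^ 2 ^ i₀ else 0 := by
  rw [sum_units_zpow_mul_truncTrace hdN, sum_eq_single_of_mem i₀ (mem_range.mpr hi₀)]
  · simp only [h i₀ hi₀, and_true]
  · exact fun i hi hne => if_neg (by simp [h i (mem_range.mp hi), hne])

end PowerSums

section TraceIdentities

variable {m : ℕ}

lemma sixteen_le_two_pow (hm : 4 ≤ m) : 16 ≤ (2 : ℤ) ^ m := by
  simpa using pow_le_pow_right₀ (one_le_two (α := ℤ)) hm

lemma two_pow_sub_one_dvd_neg_three_add_iff (hm : 4 ≤ m) {i : ℕ} (hi : i < m) :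
    (2 : ℤ) ^ m - 1 ∣ -3 + 3 * 2 ^ i ↔ i = 0 := by
  have hdvd : 16 ∣ (2 : ℤ) ^ m := pow_dvd_pow 2 hm
  have hq := sixteen_le_two_pow hm
  have hle := two_mul_two_pow_eq_or_four_mul_le hi
  have hpos : 0 < (2 : ℤ) ^ i := by positivity
  have hcases := two_pow_cases i
  rw [dvd_iff_of_abs_lt_two_mul (abs_lt.mpr (by lia))]
  lia

lemma two_pow_sub_one_dvd_add_iff (hm : 4 ≤ m) {i : ℕ} (hi : i < m) {j : ℤ} (hj : -6 ≤ j)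
    (hj' : j ≤ -4) :
    ((2 : ℤ) ^ m - 1 ∣ j + 2 * 2 ^ i ↔ j = -4 ∧ i = 1) ∧
      ((2 : ℤ) ^ m - 1 ∣ j + 1 * 2 ^ i ↔ j = -4 ∧ i = 2) ∧ ¬(2 : ℤ) ^ m - 1 ∣ j + -1 * 2 ^ i := by
  have hq := sixteen_le_two_pow hm
  have hle := two_mul_two_pow_eq_or_four_mul_le hi
  have hcases := two_pow_cases i
  refine ⟨?_, ?_, ?_⟩ <;> rw [dvd_iff_of_abs_lt_two_mul (abs_lt.mpr (by lia))] <;> lia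

lemma two_pow_add_one_dvd_add_iff (hm : 4 ≤ m) {i : ℕ} (hi : i < m) {j : ℤ} (hj : -6 ≤ j)
    (hj' : j ≤ -4) :
    ((2 : ℤ) ^ m + 1 ∣ j + 2 * 2 ^ i ↔ j = -4 ∧ i = 1) ∧
      ((2 : ℤ) ^ m + 1 ∣ j + 4 * 2 ^ i ↔ j = -4 ∧ i = 0) ∧ ¬(2 : ℤ) ^ m + 1 ∣ j + -2 * 2 ^ i := by
  have hq := sixteen_le_two_pow hm
  have hle := two_mul_two_pow_eq_or_four_mul_le hi
  have hcases := two_pow_cases i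
  refine ⟨?_, ?_, ?_⟩ <;> rw [dvd_iff_of_abs_lt_two_mul (abs_lt.mpr (by lia))] <;> lia

variable [Fintype K] (hcard : Fintype.card K = 2 ^ (2 * m))
include hcard

omit [Field K] in
lemma natCast_mul_two_pow_sub_one : ((2 ^ m + 1 : ℕ) : ℤ) * (2 ^ m - 1) = Fintype.card K - 1 := by
  rw [hcard]
  push_cast
  ring

omit [Field K] in
lemma natCast_mul_two_pow_add_one : ((2 ^ m - 1 : ℕ) : ℤ) * (2 ^ m + 1) = Fintype.card K - 1 := by
  rw [hcard, Nat.cast_sub Nat.one_le_two_pow]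
  push_cast
  ring

lemma pow_two_pow_add_one_pow_two_pow (x : K) :
    (x ^ (2 ^ m + 1)) ^ 2 ^ m = x ^ (2 ^ m + 1) := by
  rw [← pow_mul, add_mul, one_mul, ← pow_add, ← two_mul, pow_add, ← hcard, FiniteField.pow_card,
    pow_succ']

lemma pow_two_pow_sub_one_pow_two_pow_add_one {x : K} (hx : x ≠ 0) :
    (x ^ (2 ^ m - 1)) ^ (2 ^ m + 1) = 1 := by
  rw [← pow_mul, mul_comm, ← Nat.sq_sub_sq, one_pow, ← pow_mul, mul_comm, ← hcard,
    FiniteField.pow_card_sub_one_eq_one x hx]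

variable [CharP K 2] (hm : 4 ≤ m)
include hm

lemma exists_truncTrace_mul_cube_ne_one (δ : K) :
    ∃ z : K, z ^ 2 ^ m = z ∧ z ≠ 0 ∧ truncTrace m (δ * z ^ 3) ≠ 1 := by
  classical
  by_contra! h
  have hN := natCast_mul_two_pow_sub_one hcard
  have htrace := sum_units_zpow_mul_truncTrace_eq_ite hN δ (j := -3) (e := 3) (p := True)
    (i₀ := 0) (by lia : 0 < m) fun i hi =>
      (two_pow_sub_one_dvd_neg_three_add_iff hm hi).trans (iff_of_eq (true_and _)).symm
  have hone (x : Kˣ) := h _ (pow_two_pow_add_one_pow_two_pow hcard (x : K))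
    (pow_ne_zero _ x.ne_zero)
  have hndvd : ¬(2 : ℤ) ^ m - 1 ∣ -3 := by
    have hq := sixteen_le_two_pow hm
    rw [dvd_iff_of_abs_lt_two_mul (abs_lt.mpr (by lia))]
    lia
  have hδ : δ = 0 := by
    simp only [zpow_ofNat, hone, mul_one] at htrace
    simpa only [sum_units_pow_zpow hN, if_neg hndvd, if_true, pow_zero, pow_one] using htrace.symm
  simpa [hδ, truncTrace] using h 1 (one_pow _) one_ne_zero

lemma sum_units_zpow_mul_one_add_truncTrace [DecidableEq K] (a₂ a₁ c b : K) {j : ℤ} (hj : -6 ≤ j)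
    (hj' : j ≤ -4) :
    ∑ x : Kˣ, ((x : K) ^ (2 ^ m + 1)) ^ j * (1 + truncTrace m (a₂ * ((x : K) ^ (2 ^ m + 1)) ^ 2 +
      a₁ * (x : K) ^ (2 ^ m + 1) + c + b / (x : K) ^ (2 ^ m + 1))) =
      if j = -4 then a₁ ^ 4 + a₂ ^ 2 else 0 := by
  have hN := natCast_mul_two_pow_sub_one hcard
  have hdvd i (hi : i < m) := two_pow_sub_one_dvd_add_iff hm hi hj hj'
  have h₂ := sum_units_zpow_mul_truncTrace_eq_ite hN a₂ (by lia) fun i hi => (hdvd i hi).1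
  have h₁ := sum_units_zpow_mul_truncTrace_eq_ite hN a₁ (by lia) fun i hi => (hdvd i hi).2.1
  have hb := sum_units_zpow_mul_truncTrace_eq_zero hN b fun i hi => (hdvd i hi).2.2
  have hndvd : ¬(2 : ℤ) ^ m - 1 ∣ j := by
    have hq := sixteen_le_two_pow hm
    rw [dvd_iff_of_abs_lt_two_mul (abs_lt.mpr (by lia))]
    lia
  simp only [zpow_ofNat, pow_one, zpow_neg_one, ← div_eq_mul_inv] at h₂ h₁ hb
  simp only [truncTrace_add, mul_add, sum_add_distrib, mul_one, ← sum_mul,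
    sum_units_pow_zpow hN, if_neg hndvd, h₂, h₁, hb]
  split_ifs <;> ring

lemma sq_eq_of_truncTrace_eq_one {a₂ a₁ c b α γ : K}
    (h : ∀ z : K, z ^ 2 ^ m = z → z ≠ 0 → z ≠ α → z ≠ γ →
      truncTrace m (a₂ * z ^ 2 + a₁ * z + c + b / z) = 1) : a₁ ^ 2 = a₂ := by
  classical
  have hsum {j : ℤ} (hj : -6 ≤ j) (hj' : j ≤ -4) :=
    sum_units_zpow_mul_one_add_truncTrace hcard hm a₂ a₁ c b hj hj'
  have hvanish := mul_sum_zpow_eq_zero_of_quadratic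
    (z := fun x : Kˣ => (x : K) ^ (2 ^ m + 1)) (s₀ := α * γ) (s₁ := α + γ) (s₂ := 1)
    (fun x => pow_ne_zero _ x.ne_zero) (fun x => ?_) (hsum le_rfl (by lia))
    (hsum (by lia) (by lia))
  · rw [hsum (by lia) (by lia), if_pos (by lia), one_mul] at hvanish
    refine CharTwo.sq_injective ?_
    linear_combination hvanish - a₂ ^ 2 * CharTwo.two_eq_zero (R := K)
  · have hz := h _ (pow_two_pow_add_one_pow_two_pow hcard (x : K)) (pow_ne_zero _ x.ne_zero)
    generalize (x : K) ^ (2 ^ m + 1) = z at hz ⊢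
    rw [show α * γ + (α + γ) * z + 1 * z ^ 2 = (z + α) * (z + γ) by ring]
    by_cases hα : z = α
    · rw [hα, CharTwo.add_self_eq_zero, zero_mul, zero_mul]
    by_cases hγ : z = γ
    · rw [hγ, CharTwo.add_self_eq_zero, mul_zero, zero_mul]
    rw [hz hα hγ, CharTwo.add_self_eq_zero, mul_zero]

lemma sum_units_zpow_mul_truncTrace_add [DecidableEq K] (A D C G a b : K) {j : ℤ} (hj : -6 ≤ j)
    (hj' : j ≤ -4) :
    ∑ x : Kˣ, ((x : K) ^ (2 ^ m - 1)) ^ j * (truncTrace m (A * ((x : K) ^ (2 ^ m - 1)) ^ (-2 : ℤ) +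
      D + C * ((x : K) ^ (2 ^ m - 1)) ^ 2 + G * ((x : K) ^ (2 ^ m - 1)) ^ 4) +
      (a * ((x : K) ^ (2 ^ m - 1)) ^ (-2 : ℤ) + b * ((x : K) ^ (2 ^ m - 1)) ^ 2)) =
      if j = -4 then C ^ 2 + G else 0 := by
  have hN := natCast_mul_two_pow_add_one hcard
  have hdvd i (hi : i < m) := two_pow_add_one_dvd_add_iff hm hi hj hj'
  have hA := sum_units_zpow_mul_truncTrace_eq_zero hN A fun i hi => (hdvd i hi).2.2
  have hC := sum_units_zpow_mul_truncTrace_eq_ite hN C (by lia) fun i hi => (hdvd i hi).1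
  have hG := sum_units_zpow_mul_truncTrace_eq_ite hN G (by lia) fun i hi => (hdvd i hi).2.1
  have hq := sixteen_le_two_pow hm
  have hmono (c : K) {e : ℤ} (he : |e| ≤ 2) :
      ∑ x : Kˣ, ((x : K) ^ (2 ^ m - 1)) ^ j * (c * ((x : K) ^ (2 ^ m - 1)) ^ e) = 0 := by
    simp only [mul_left_comm _ c, ← zpow_add₀ (pow_ne_zero _ (Units.ne_zero _)), ← mul_sum,
      sum_units_pow_zpow hN]
    have hndvd : ¬(2 : ℤ) ^ m + 1 ∣ j + e := by
      rw [abs_le] at he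
      rw [dvd_iff_of_abs_lt_two_mul (abs_lt.mpr (by lia))]
      lia
    rw [if_neg hndvd, mul_zero]
  have hD := hmono (truncTrace m D) (e := 0) (by simp)
  have ha := hmono a (e := -2) (by simp)
  have hb := hmono b (e := 2) (by simp)
  simp only [zpow_ofNat, pow_zero, mul_one] at hC hG hD hb
  simp only [truncTrace_add, mul_add, sum_add_distrib, hA, hC, hG, hD, ha, hb]
  split_ifs <;> ring

lemma sq_eq_of_truncTrace_add_eq_zero {A D C G a b s₀ s₁ s₂ : K} (hs₂ : s₂ ≠ 0)
    (h : ∀ v : K, v ^ (2 ^ m + 1) = 1 → s₀ + s₁ * v + s₂ * v ^ 2 ≠ 0 →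
      truncTrace m (A * v ^ (-2 : ℤ) + D + C * v ^ 2 + G * v ^ 4) +
        (a * v ^ (-2 : ℤ) + b * v ^ 2) = 0) : C ^ 2 = G := by
  classical
  have hsum {j : ℤ} (hj : -6 ≤ j) (hj' : j ≤ -4) :=
    sum_units_zpow_mul_truncTrace_add hcard hm A D C G a b hj hj'
  have hvanish := mul_sum_zpow_eq_zero_of_quadratic
    (z := fun x : Kˣ => (x : K) ^ (2 ^ m - 1)) (s₀ := s₀) (s₁ := s₁) (s₂ := s₂)
    (fun x => pow_ne_zero _ x.ne_zero) (fun x => ?_) (hsum le_rfl (by lia))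
    (hsum (by lia) (by lia))
  · rw [hsum (by lia) (by lia), if_pos (by lia)] at hvanish
    exact CharTwo.add_eq_zero.mp ((mul_eq_zero.mp hvanish).resolve_left hs₂)
  · by_cases hs : s₀ + s₁ * (x : K) ^ (2 ^ m - 1) + s₂ * ((x : K) ^ (2 ^ m - 1)) ^ 2 = 0
    · rw [hs, zero_mul]
    · rw [h _ (pow_two_pow_sub_one_pow_two_pow_add_one hcard x.ne_zero) hs, mul_zero]

end TraceIdentities

section FixedFieldSystem

/-- `(u, s, t)` is a solution over the fixed field of `σ` of the system
`s² u + s u² + α (t² + t) = 0`, `s² + u² t + μ² (t² + t) = 0` that is neither of the trivial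
solutions `(u, 0, 0)` and `(u, u, 1)`. -/
structure IsNontrivialSolution (σ : K →+* K) (α μ u s t : K) : Prop where
  conj_u : σ u = u
  conj_s : σ s = s
  conj_t : σ t = t
  eq_zero : s ^ 2 * u + s * u ^ 2 + α * (t ^ 2 + t) = 0
  eq_zero' : s ^ 2 + u ^ 2 * t + μ ^ 2 * (t ^ 2 + t) = 0
  ne_zero : (s, t) ≠ (0, 0)
  ne_one : (s, t) ≠ (u, 1)

variable [Fintype K] [CharP K 2] {m : ℕ} {σ : K →+* K}
  (hcard : Fintype.card K = 2 ^ (2 * m)) (hσ : ∀ x, σ x = x ^ 2 ^ m)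
  {α μ : K} (hα : σ α = α) (hμ : σ μ = μ)
include hcard hσ hα hμ

/-- With `g = u² (u + μ) / (α + u μ²)` and `t² + t = g²`, a solution is `s = u t + g (u + μ)`. -/
lemma exists_isNontrivialSolution_of_truncTrace_ne_one {u : K} (hu : σ u = u) (hu0 : u ≠ 0)
    (huμ : u ≠ μ) (hden : α + u * μ ^ 2 ≠ 0)
    (hT : truncTrace m (u ^ 2 * (u + μ) / (α + u * μ ^ 2)) ≠ 1) :
    ∃ s t, IsNontrivialSolution σ α μ u s t := by
  obtain ⟨g, hg⟩ : ∃ g, g = u ^ 2 * (u + μ) / (α + u * μ ^ 2) := ⟨_, rfl⟩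
  have hgden : g * (α + u * μ ^ 2) = u ^ 2 * (u + μ) := by rw [hg, div_mul_cancel₀ _ hden]
  have hσg : σ g = g := by simp only [hg, map_div₀, map_mul, map_add, map_pow, hu, hα, hμ]
  have huμ' : u + μ ≠ 0 := fun h => huμ (CharTwo.add_eq_zero.mp h)
  have hg0 : g ≠ 0 := by
    rw [hg]
    exact div_ne_zero (mul_ne_zero (pow_ne_zero 2 hu0) huμ') hden
  have hTsq : truncTrace m (g ^ 2) ≠ 0 + 1 := by
    rw [truncTrace_sq, zero_add]
    exact fun h => hT (hg ▸ CharTwo.sq_injective (h.trans (one_pow 2).symm))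
  obtain ⟨t, ht, hσt⟩ := exists_sq_add_self_eq_and_conj_eq_add hcard hσ (map_zero σ)
    (by rw [map_pow, hσg]; ring) hTsq
  rw [add_zero] at hσt
  refine ⟨u * t + g * (u + μ), t, hu, ?_, hσt, ?_, ?_, ?_, ?_⟩
  · simp only [map_add, map_mul, hu, hσt, hσg, hμ]
  · grind
  · grind
  · rw [Ne, Prod.mk_inj]
    rintro ⟨hs, rfl⟩
    exact mul_ne_zero hg0 huμ' (by linear_combination hs)
  · rw [Ne, Prod.mk_inj]
    rintro ⟨hs, rfl⟩
    exact mul_ne_zero hg0 huμ' (by linear_combination hs)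

lemma truncTrace_eq_one_of_forall_not_isNontrivialSolution
    (h : ∀ u s t, ¬IsNontrivialSolution σ α μ u s t) (hμ0 : μ ≠ 0) {z : K} (hz : σ z = z)
    (hz0 : z ≠ 0) (hzα : z ≠ α) (hzγ : z ≠ α + μ ^ 3) :
    truncTrace m (1 / μ ^ 6 * z ^ 2 + (α + μ ^ 3) / μ ^ 6 * z + α ^ 2 / μ ^ 6 +
      α ^ 2 * (α + μ ^ 3) / μ ^ 6 / z) = 1 := by
  by_contra hT
  obtain ⟨u, hu⟩ : ∃ u, u = (z + α) / μ ^ 2 := ⟨_, rfl⟩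
  have huz : u * μ ^ 2 = z + α := by rw [hu, div_mul_cancel₀ _ (pow_ne_zero 2 hμ0)]
  have hden : α + u * μ ^ 2 = z := by rw [huz, add_comm, CharTwo.add_cancel_right]
  have hσu : σ u = u := by simp only [hu, map_div₀, map_add, map_pow, hz, hα, hμ]
  have hu0 : u ≠ 0 := by
    rintro rfl
    exact hzα (CharTwo.add_eq_zero.mp (by rw [← huz, zero_mul]))
  have huμ : u ≠ μ := by
    rintro rfl
    exact hzγ (by grind)
  have hT' : truncTrace m (u ^ 2 * (u + μ) / (α + u * μ ^ 2)) ≠ 1 := by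
    convert hT using 2
    rw [hden, hu]
    field_simp
    grind
  obtain ⟨s, t, hst⟩ := exists_isNontrivialSolution_of_truncTrace_ne_one hcard hσ hα hμ hσu hu0
    huμ (hden ▸ hz0) hT'
  exact h u s t hst

variable (hm : 4 ≤ m)
include hm

omit hμ in
lemma exists_isNontrivialSolution_zero : ∃ u s t, IsNontrivialSolution σ α 0 u s t := by
  by_cases hα0 : α = 0
  · obtain ⟨τ, hτ, hτ0, hτ1⟩ := exists_conj_eq_self_ne_zero_ne_one hcard hσ (by lia)
    exact ⟨0, 0, τ, map_zero σ, map_zero σ, hτ, by rw [hα0]; ring, by ring, by simp [hτ0],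
      by simp [hτ1]⟩
  · obtain ⟨u, hu, hu0, hT⟩ := exists_truncTrace_mul_cube_ne_one hcard hm α⁻¹
    refine ⟨u, exists_isNontrivialSolution_of_truncTrace_ne_one hcard hσ hα (map_zero σ)
      (by rw [hσ, hu]) hu0 hu0 (by simpa using hα0) ?_⟩
    convert hT using 2
    ring

lemma exists_isNontrivialSolution : ∃ u s t, IsNontrivialSolution σ α μ u s t := by
  by_cases hμ0 : μ = 0
  · rw [hμ0]
    exact exists_isNontrivialSolution_zero hcard hσ hα hm
  by_contra! h
  have hT {z : K} := truncTrace_eq_one_of_forall_not_isNontrivialSolution hcard hσ hα hμ h hμ0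
    (z := z)
  have hα0 : α = 0 := by
    have hsq := sq_eq_of_truncTrace_eq_one hcard hm fun z hz => hT (by rw [hσ, hz])
    field_simp at hsq
    have : α ^ 2 = 0 := by grind
    exact pow_eq_zero_iff two_ne_zero |>.mp this
  obtain ⟨τ, hτ, hτ0, hτ1⟩ := exists_conj_eq_self_ne_zero_ne_one hcard hσ (by lia)
  have hμ3 : μ ^ 3 ≠ 0 := pow_ne_zero 3 hμ0
  have hone := hT (z := μ ^ 3 * τ) (by simp only [map_mul, map_pow, hμ, hτ])
    (mul_ne_zero hμ3 hτ0) (hα0 ▸ mul_ne_zero hμ3 hτ0) (by simp [hα0, hμ3, hτ1])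
  have harg : 1 / μ ^ 6 * (μ ^ 3 * τ) ^ 2 + (α + μ ^ 3) / μ ^ 6 * (μ ^ 3 * τ) + α ^ 2 / μ ^ 6 +
      α ^ 2 * (α + μ ^ 3) / μ ^ 6 / (μ ^ 3 * τ) = τ ^ 2 + τ := by
    rw [hα0]
    field_simp
    ring
  rw [harg, truncTrace_sq_add_self, ← hσ, hτ, CharTwo.add_self_eq_zero] at hone
  exact zero_ne_one hone

end FixedFieldSystem

section BinaryCubic

variable [Fintype K] [CharP K 2] {m : ℕ} {σ : K →+* K}

lemma exists_binaryCubic_polar_eq_zero (hm : 4 ≤ m) (hcard : Fintype.card K = 2 ^ (2 * m))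
    (hσ : ∀ x, σ x = x ^ 2 ^ m) {C₀ : K} (hC₀ : C₀ ≠ 0) (C₁ C₃ : K) :
    ∃ u v s t : K, σ u = u ∧ σ v = v ∧ σ s = s ∧ σ t = t ∧
      C₀ * (s ^ 2 * u + s * u ^ 2) + C₁ * (s ^ 2 * v + u ^ 2 * t) +
        C₃ * (t ^ 2 * v + t * v ^ 2) = 0 ∧
      (u, v) ≠ (0, 0) ∧ (s, t) ≠ (0, 0) ∧ (s, t) ≠ (u, v) := by
  obtain ⟨ρ, rfl⟩ : ∃ ρ, C₁ = C₀ * ρ := ⟨C₁ / C₀, by field_simp⟩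
  obtain ⟨κ, rfl⟩ : ∃ κ, C₃ = C₀ * κ := ⟨C₃ / C₀, by field_simp⟩
  obtain ⟨τ, hτ, hτ0, hτ1⟩ := exists_conj_eq_self_ne_zero_ne_one hcard hσ (by lia)
  by_cases hρ : σ ρ = ρ
  · by_cases hρ0 : ρ = 0
    · exact ⟨1, 0, 0, 1, map_one σ, map_zero σ, map_zero σ, map_one σ, by rw [hρ0]; ring,
        by simp, by simp, by simp⟩
    · exact ⟨1, 0, τ, (τ ^ 2 + τ) / ρ, map_one σ, map_zero σ, hτ, by simp [hτ, hρ],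
        by field_simp; grind, by simp, by simp [hτ0], by simp [hτ1]⟩
  · have hden : ρ + σ ρ ≠ 0 := fun h => hρ (CharTwo.add_eq_zero.mp h).symm
    obtain ⟨μ, hμ⟩ := exists_sq_eq ((κ + σ κ) / (ρ + σ ρ))
    have hσσ := conj_involutive hcard hσ
    have hσμ : σ μ = μ := conj_eq_self_of_sq <| by
      rw [hμ, map_div₀, map_add, map_add, hσσ, hσσ, add_comm, add_comm ρ]
    rw [eq_div_iff hden] at hμ
    have hσα : σ (κ + μ ^ 2 * ρ) = κ + μ ^ 2 * ρ := by
      simp only [map_add, map_mul, map_pow, hσμ]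
      grind
    obtain ⟨u, s, t, hu, hs, ht, h₁, h₂, h0, h1⟩ := exists_isNontrivialSolution hcard hσ hσα hσμ hm
    refine ⟨u, 1, s, t, hu, map_one σ, hs, ht, ?_, by simp, h0, h1⟩
    linear_combination C₀ * h₁ + C₀ * ρ * h₂ -
      C₀ * ρ * μ ^ 2 * (t ^ 2 + t) * CharTwo.two_eq_zero (R := K)

end BinaryCubic

section PolarKernel

/-- `f (x + a) - f x - f a` vanishes, for `a ≠ 0`, only at the unavoidable points `x ∈ {0, a}`. For
quadratic functions with `f 0 = 0` in characteristic two this is the APN property. -/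
def HasTrivialPolarKernel (f : K → K) : Prop :=
  ∀ a x : K, a ≠ 0 → QuadraticMap.polar f x a = 0 → x = 0 ∨ x = a

lemma hasTrivialPolarKernel_of_isAPN [Finite K] [CharP K 2] {f : K → K} (h0 : f 0 = 0)
    (hf : IsAPN f) : HasTrivialPolarKernel f := by
  intro a x ha hx
  by_contra! hne
  have hsub : ({0, a, x} : Set K) ⊆ {x | f (x + a) + f x = f a} := by
    rintro y (rfl | rfl | rfl)
    · simp [h0]
    · simp [h0, CharTwo.add_self_eq_zero]
    · rw [QuadraticMap.polar, sub_sub, sub_eq_zero] at hx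
      rw [Set.mem_ofPred_eq, hx, add_comm (f y), CharTwo.add_cancel_right]
  have hcard := (Set.ncard_le_ncard hsub (Set.toFinite _)).trans (hf a ha (f a))
  rw [Set.ncard_eq_three.mpr ⟨0, a, x, ha.symm, hne.1.symm, hne.2.symm, rfl⟩] at hcard
  lia

lemma HasTrivialPolarKernel.comp_addMonoidHom {f : K → K} (hf : HasTrivialPolarKernel f)
    {M : K →+ K} (hM : Injective M) : HasTrivialPolarKernel (f ∘ M) := by
  intro a x ha hx
  refine (hf (M a) (M x) ((map_ne_zero_iff M hM).mpr ha) ?_).imp (fun h => ?_) fun h => hM h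
  · simpa only [QuadraticMap.polar, comp_apply, map_add] using hx
  · exact (map_eq_zero_iff M hM).mp h

end PolarKernel

section TwistedCubic

/-- The function `x ↦ c₀ x³ + c₁ x² σ(x) + c₂ x σ(x)² + c₃ σ(x)³`; for `σ x = x ^ q` these are the
Kim-type functions. -/
def cubic (σ : K →+* K) (c : Fin 4 → K) (x : K) : K :=
  c 0 * x ^ 3 + c 1 * x ^ 2 * σ x + c 2 * x * σ x ^ 2 + c 3 * σ x ^ 3

/-- The `2 × 2` minors of the pair of rows `c` and `(σ c₃, σ c₂, σ c₁, σ c₀)`, the coefficients of a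
twisted cubic and of its conjugate, in characteristic two. -/
def plucker (σ : K →+* K) (c : Fin 4 → K) (i j : Fin 4) : K := c i * σ (c j.rev) + c j * σ (c i.rev)

/-- The minor sum `p₀₃ + p₁₂`, the coefficient which the transvectant and the Jacobian of a twisted
cubic and its conjugate share. -/
def crossCoeff (σ : K →+* K) (c : Fin 4 → K) : K := plucker σ c 0 3 + plucker σ c 1 2

/-- The second transvectant of the binary cubic `∑ cᵢ X^{3-i} Y^i` and its conjugate. Being a
covariant, its zeros move along with linear substitutions in the cubic. -/
def transvectant (σ : K →+* K) (c : Fin 4 → K) (X Y : K) : K :=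
  plucker σ c 0 2 * X ^ 2 + crossCoeff σ c * X * Y + plucker σ c 1 3 * Y ^ 2

variable {σ : K →+* K} {c : Fin 4 → K}

lemma polar_cubic [CharP K 2] (x a : K) :
    QuadraticMap.polar (cubic σ c) x a = c 0 * (x ^ 2 * a + x * a ^ 2) +
      c 1 * (x ^ 2 * σ a + a ^ 2 * σ x) + c 2 * (x * σ a ^ 2 + a * σ x ^ 2) +
      c 3 * (σ x ^ 2 * σ a + σ x * σ a ^ 2) := by
  simp only [QuadraticMap.polar, cubic, map_add]
  grind

lemma pair_eq_of_add_mul_eq {e : K} (he : σ e ≠ e) {s t u v : K} (hs : σ s = s) (ht : σ t = t)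
    (hu : σ u = u) (hv : σ v = v) (h : s + t * e = u + v * e) : (s, t) = (u, v) := by
  have hσ := congrArg σ h
  simp only [map_add, map_mul, hs, ht, hu, hv] at hσ
  have htv : t = v := by
    refine sub_eq_zero.mp ((mul_eq_zero.mp ?_).resolve_right (sub_ne_zero.mpr he))
    linear_combination hσ - h
  rw [htv, add_left_inj] at h
  rw [h, htv]

variable [Fintype K] [CharP K 2] {m : ℕ} (hcard : Fintype.card K = 2 ^ (2 * m))
  (hσ : ∀ x, σ x = x ^ 2 ^ m)
include hcard hσ

lemma sum_coeff_ne_zero (hm : 2 ≤ m) (hker : HasTrivialPolarKernel (cubic σ c)) :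
    c 0 + c 1 + c 2 + c 3 ≠ 0 := by
  intro hsum
  obtain ⟨τ, hτ, hτ0, hτ1⟩ := exists_conj_eq_self_ne_zero_ne_one hcard hσ hm
  refine (hker 1 τ one_ne_zero ?_).elim hτ0 hτ1
  rw [polar_cubic, hτ, map_one]
  linear_combination (τ ^ 2 + τ) * hsum

lemma exists_conj_ne_self_coeff_eq_zero (hsum : c 0 + c 1 + c 2 + c 3 ≠ 0)
    (htr : transvectant σ c 1 1 = 0) :
    ∃ e : K, σ e ≠ e ∧ (c 0 + c 1) * e ^ 2 + (c 2 + c 3) * σ e ^ 2 = 0 := by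
  obtain ⟨e, he⟩ := exists_conj_ne_self hcard hσ
  have hσσ := conj_involutive hcard hσ
  obtain ⟨μ, hμ⟩ := exists_sq_eq
    (((c 0 + c 1) * e ^ 2 + (c 2 + c 3) * σ e ^ 2) / (c 0 + c 1 + c 2 + c 3))
  have hσμ : σ μ = μ := conj_eq_self_of_sq <| by
    rw [hμ, map_div₀, div_eq_div_iff ((map_ne_zero σ).mpr hsum) hsum]
    simp only [transvectant, crossCoeff, plucker, Fin.reduceRev] at htr
    simp only [map_add, map_mul, map_pow, hσσ _]
    grind
  rw [eq_div_iff hsum] at hμ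
  refine ⟨e + μ, ?_, ?_⟩
  · rw [map_add, hσμ, Ne, add_left_inj]
    exact he
  · rw [map_add, hσμ]
    grind

/-- On `e` as in `exists_conj_ne_self_coeff_eq_zero` the cubic, in coordinates with respect to the
basis `1, e` over the fixed field, has no mixed `u v²` term. -/
lemma transvectant_one_one_ne_zero (hm : 4 ≤ m) (hker : HasTrivialPolarKernel (cubic σ c)) :
    transvectant σ c 1 1 ≠ 0 := by
  intro htr
  have hsum := sum_coeff_ne_zero hcard hσ (by lia) hker
  obtain ⟨e, he, hmixed⟩ := exists_conj_ne_self_coeff_eq_zero hcard hσ hsum htr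
  obtain ⟨u, v, s, t, hu, hv, hs, ht, hzero, huv, hst0, hst⟩ :=
    exists_binaryCubic_polar_eq_zero hm hcard hσ hsum ((c 0 + c 2) * e + (c 1 + c 3) * σ e)
      (cubic σ c e)
  have hne (a b : K) (ha : σ a = a) (hb : σ b = b) (hab : (a, b) ≠ (0, 0)) : a + b * e ≠ 0 :=
    fun h => hab (pair_eq_of_add_mul_eq he ha hb (map_zero σ) (map_zero σ) (by simpa using h))
  have hpolar : QuadraticMap.polar (cubic σ c) (s + t * e) (u + v * e) = 0 := by
    rw [polar_cubic]
    simp only [cubic] at hzero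
    simp only [map_add, map_mul, hu, hv, hs, ht]
    grind
  rcases hker _ _ (hne u v hu hv huv) hpolar with h | h
  · exact hne s t hs ht hst0 h
  · exact hst (pair_eq_of_add_mul_eq he hs ht hu hv h)

lemma transvectant_conj_ne_zero (hm : 4 ≤ m) (hker : HasTrivialPolarKernel (cubic σ c)) {x : K}
    (hx : x ≠ 0) : transvectant σ c x (σ x) ≠ 0 := by
  let c' : Fin 4 → K := ![c 0 * x ^ 3, c 1 * x ^ 2 * σ x, c 2 * x * σ x ^ 2, c 3 * σ x ^ 3]
  have hcubic : cubic σ c' = cubic σ c ∘ AddMonoidHom.mulLeft x := by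
    funext y
    simp [c', cubic]
    ring
  have hker' := hker.comp_addMonoidHom (M := AddMonoidHom.mulLeft x) (mul_right_injective₀ hx)
  have hne := transvectant_one_one_ne_zero hcard hσ hm (hcubic ▸ hker')
  have hscale : transvectant σ c' 1 1 = (x * σ x) ^ 2 * transvectant σ c x (σ x) := by
    simp [transvectant, crossCoeff, plucker, c', conj_involutive hcard hσ _]
    ring
  rw [hscale] at hne
  exact right_ne_zero_of_mul hne

end TwistedCubic

section Plucker

variable {σ : K →+* K} {c : Fin 4 → K}

lemma plucker_comm (i j : Fin 4) : plucker σ c i j = plucker σ c j i := add_comm _ _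

lemma conj_plucker (hσσ : Involutive σ) (i j : Fin 4) :
    σ (plucker σ c i j) = plucker σ c j.rev i.rev := by
  simp only [plucker, map_add, map_mul, hσσ _, Fin.rev_rev]
  ring

lemma conj_crossCoeff (hσσ : Involutive σ) : σ (crossCoeff σ c) = crossCoeff σ c := by
  simp only [crossCoeff, map_add, conj_plucker hσσ, Fin.reduceRev]

variable [CharP K 2]

lemma coeff_mul_plucker (i j k : Fin 4) :
    c i * plucker σ c j k + c j * plucker σ c i k + c k * plucker σ c i j = 0 := by
  simp only [plucker]
  grind

lemma plucker_relation :
    plucker σ c 0 1 * plucker σ c 2 3 + plucker σ c 0 2 * plucker σ c 1 3 +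
      plucker σ c 0 3 * plucker σ c 1 2 = 0 := by
  simp only [plucker, Fin.reduceRev]
  grind

end Plucker

section Jacobian

/-- The Jacobian determinant of the binary cubic `∑ cᵢ X^{3-i} Y^i` and its conjugate in
characteristic two, evaluated at `(1, v)` and divided by `v²`. -/
def jacobian (σ : K →+* K) (c : Fin 4 → K) (v : K) : K :=
  plucker σ c 0 1 * v⁻¹ ^ 2 + crossCoeff σ c + plucker σ c 2 3 * v ^ 2

variable {σ : K →+* K} {c : Fin 4 → K}

lemma conj_jacobian (hσσ : Involutive σ) {v : K} (hv : v * σ v = 1) :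
    σ (jacobian σ c v) = jacobian σ c v := by
  simp only [jacobian, map_add, map_mul, map_pow, map_inv₀, conj_plucker hσσ, conj_crossCoeff hσσ,
    Fin.reduceRev, eq_inv_of_mul_eq_one_right hv, inv_inv]
  ring

variable [CharP K 2]

lemma jacobian_eq_sq {s₀ s₁ s₂ : K} (hs₀ : s₀ ^ 2 = plucker σ c 0 1)
    (hs₁ : s₁ ^ 2 = crossCoeff σ c) (hs₂ : s₂ ^ 2 = plucker σ c 2 3) {v : K} (hv : v ≠ 0) :
    jacobian σ c v = ((s₀ + s₁ * v + s₂ * v ^ 2) / v) ^ 2 := by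
  rw [div_pow, CharTwo.add_sq, CharTwo.add_sq, mul_pow, mul_pow, hs₀, hs₁, hs₂, jacobian]
  field_simp

/-- The coefficients on the left are those of `z² + z`, `y` and `y²` in `polar_cubic_mul_self`. -/
lemma sum_mul_plucker_add_jacobian (h₀₂ : plucker σ c 0 2 = 0) (h₁₃ : plucker σ c 1 3 = 0)
    {v : K} (hv : v ≠ 0) :
    (c 0 + c 1 * v + c 2 * v ^ 2 + c 3 * v ^ 3) * (plucker σ c 1 2 + plucker σ c 2 3 * v ^ 2) +
      (c 1 * v + c 3 * v ^ 3) * crossCoeff σ c +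
      (c 2 * v ^ 2 + c 3 * v ^ 3) * jacobian σ c v = 0 := by
  have h012 := coeff_mul_plucker (σ := σ) (c := c) 0 1 2
  have h013 := coeff_mul_plucker (σ := σ) (c := c) 0 1 3
  have h023 := coeff_mul_plucker (σ := σ) (c := c) 0 2 3
  have h123 := coeff_mul_plucker (σ := σ) (c := c) 1 2 3
  have hjac : v ^ 2 * jacobian σ c v =
      plucker σ c 0 1 + crossCoeff σ c * v ^ 2 + plucker σ c 2 3 * v ^ 4 := by
    rw [jacobian]
    field_simp
  simp only [h₀₂, h₁₃, crossCoeff] at *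
  grind

lemma jacobian_div_add_one (hw : crossCoeff σ c ≠ 0) (v : K) :
    jacobian σ c v / crossCoeff σ c + 1 =
      plucker σ c 0 1 / crossCoeff σ c * v ^ (-2 : ℤ) +
        plucker σ c 2 3 / crossCoeff σ c * v ^ 2 := by
  rw [jacobian, zpow_neg, zpow_ofNat, ← inv_pow]
  grind

lemma jacobian_mul_div_eq (h₀₂ : plucker σ c 0 2 = 0) {v : K} (hv : v ≠ 0) :
    jacobian σ c v * (plucker σ c 1 2 + plucker σ c 2 3 * v ^ 2) / crossCoeff σ c ^ 2 =
      plucker σ c 0 1 * plucker σ c 1 2 / crossCoeff σ c ^ 2 * v ^ (-2 : ℤ) +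
        plucker σ c 1 2 ^ 2 / crossCoeff σ c ^ 2 +
        plucker σ c 2 3 * plucker σ c 0 3 / crossCoeff σ c ^ 2 * v ^ 2 +
        plucker σ c 2 3 ^ 2 / crossCoeff σ c ^ 2 * v ^ 4 := by
  have hrel := plucker_relation (σ := σ) (c := c)
  rw [h₀₂, zero_mul, add_zero] at hrel
  have hnum : jacobian σ c v * (plucker σ c 1 2 + plucker σ c 2 3 * v ^ 2) =
      plucker σ c 0 1 * plucker σ c 1 2 * v⁻¹ ^ 2 + plucker σ c 1 2 ^ 2 +
        plucker σ c 2 3 * plucker σ c 0 3 * v ^ 2 + plucker σ c 2 3 ^ 2 * v ^ 4 := by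
    rw [jacobian, crossCoeff]
    grind
  rw [hnum, zpow_neg, zpow_ofNat, inv_pow]
  ring

lemma polar_cubic_mul_self {a v y z : K} (ha : σ a = v * a) (hz : σ z = z + y) :
    QuadraticMap.polar (cubic σ c) (a * z) a =
      a ^ 3 * ((c 0 + c 1 * v + c 2 * v ^ 2 + c 3 * v ^ 3) * (z ^ 2 + z) +
        (c 1 * v + c 3 * v ^ 3) * y + (c 2 * v ^ 2 + c 3 * v ^ 3) * y ^ 2) := by
  rw [polar_cubic, map_mul, ha, hz]
  grind

lemma HasTrivialPolarKernel.conj_ne_add (hker : HasTrivialPolarKernel (cubic σ c)) {v y z : K}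
    (hv : v * σ v = 1) (hy : y ≠ 0)
    (hz : (c 0 + c 1 * v + c 2 * v ^ 2 + c 3 * v ^ 3) * (z ^ 2 + z) +
      (c 1 * v + c 3 * v ^ 3) * y + (c 2 * v ^ 2 + c 3 * v ^ 3) * y ^ 2 = 0) :
    σ z ≠ z + y := by
  intro hσz
  obtain ⟨a, ha, hσa⟩ := exists_conj_eq_mul hv
  have hpolar := polar_cubic_mul_self (c := c) hσa hσz
  rw [hz, mul_zero] at hpolar
  rcases hker a (a * z) ha hpolar with h | h
  · rw [(mul_eq_zero.mp h).resolve_left ha, map_zero, zero_add] at hσz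
    exact hy hσz.symm
  · rw [(mul_eq_left₀ ha).mp h, map_one, left_eq_add] at hσz
    exact hy hσz

variable [Fintype K] {m : ℕ} (hcard : Fintype.card K = 2 ^ (2 * m)) (hσ : ∀ x, σ x = x ^ 2 ^ m)
include hcard hσ

lemma truncTrace_jacobian_mul_eq (hker : HasTrivialPolarKernel (cubic σ c))
    (h₀₂ : plucker σ c 0 2 = 0) (hw : crossCoeff σ c ≠ 0) {v : K} (hv : v * σ v = 1)
    (hA : jacobian σ c v ≠ 0) :
    truncTrace m (jacobian σ c v * (plucker σ c 1 2 + plucker σ c 2 3 * v ^ 2) /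
      crossCoeff σ c ^ 2) = jacobian σ c v / crossCoeff σ c + 1 := by
  have hσσ := conj_involutive hcard hσ
  have hv0 := left_ne_zero_of_mul_eq_one hv
  have h₁₃ : plucker σ c 1 3 = 0 := by
    simpa only [conj_plucker hσσ, Fin.reduceRev, map_zero] using congrArg σ h₀₂
  have hE := sum_mul_plucker_add_jacobian h₀₂ h₁₃ hv0
  have hσA := conj_jacobian (c := c) hσσ hv
  have hσw := conj_crossCoeff (c := c) hσσ
  have hjac : jacobian σ c v =
      plucker σ c 0 1 * v⁻¹ ^ 2 + crossCoeff σ c + plucker σ c 2 3 * v ^ 2 := rfl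
  set A := jacobian σ c v
  set w := crossCoeff σ c
  by_contra hT
  obtain ⟨z, hz, hσz⟩ := exists_sq_add_self_eq_and_conj_eq_add hcard hσ (y := A / w)
    (by rw [map_div₀, hσA, hσw]) (by
      simp only [map_div₀, map_mul, map_add, map_pow, hσA, hσw, conj_plucker hσσ, Fin.reduceRev,
        eq_inv_of_mul_eq_one_right hv]
      field_simp
      grind) hT
  refine hker.conj_ne_add hv (div_ne_zero hA hw) ?_ hσz
  rw [hz]
  field_simp
  linear_combination A * hE

lemma plucker_mul_plucker_eq_zero (hm : 4 ≤ m) (hker : HasTrivialPolarKernel (cubic σ c))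
    (h₀₂ : plucker σ c 0 2 = 0) (hw : crossCoeff σ c ≠ 0) :
    plucker σ c 2 3 * plucker σ c 1 2 = 0 := by
  by_cases h₂₃ : plucker σ c 2 3 = 0
  · rw [h₂₃, zero_mul]
  obtain ⟨s₀, hs₀⟩ := exists_sq_eq (plucker σ c 0 1)
  obtain ⟨s₁, hs₁⟩ := exists_sq_eq (crossCoeff σ c)
  obtain ⟨s₂, hs₂⟩ := exists_sq_eq (plucker σ c 2 3)
  have hs₂0 : s₂ ≠ 0 := fun h => h₂₃ (by rw [← hs₂, h, zero_pow two_ne_zero])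
  have hsq := sq_eq_of_truncTrace_add_eq_zero hcard hm (s₀ := s₀) (s₁ := s₁) hs₂0
    fun v hv hne => by
      have hv1 : v * σ v = 1 := by rw [hσ, ← pow_succ', hv]
      have hv0 := left_ne_zero_of_mul_eq_one hv1
      have hA : jacobian σ c v ≠ 0 := by
        rw [jacobian_eq_sq hs₀ hs₁ hs₂ hv0]
        exact pow_ne_zero 2 (div_ne_zero hne hv0)
      have htrace := truncTrace_jacobian_mul_eq hcard hσ hker h₀₂ hw hv1 hA
      rw [jacobian_mul_div_eq h₀₂ hv0, jacobian_div_add_one hw] at htrace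
      exact CharTwo.add_eq_zero.mpr htrace
  have hw_eq : crossCoeff σ c = plucker σ c 0 3 + plucker σ c 1 2 := rfl
  field_simp at hsq
  refine pow_eq_zero_iff two_ne_zero |>.mp ?_
  grind

end Jacobian

section Classification

variable {σ : K →+* K} {c : Fin 4 → K}

/-- The twisted cubic has the form `L(x³)` or `L(x² σ(x))` for `L z = a z + b σ(z)`, where the
condition `a σ(a) ≠ b σ(b)` makes `L` bijective. -/
def IsMonomialType (σ : K →+* K) (c : Fin 4 → K) : Prop :=
  (c 1 = 0 ∧ c 2 = 0 ∧ c 0 * σ (c 0) ≠ c 3 * σ (c 3)) ∨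
    (c 0 = 0 ∧ c 3 = 0 ∧ c 1 * σ (c 1) ≠ c 2 * σ (c 2))

lemma coeff_eq_zero_of_plucker [CharP K 2] {i j k : Fin 4} (hij : plucker σ c i j = 0)
    (hik : plucker σ c i k = 0) (hjk : plucker σ c j k ≠ 0) : c i = 0 := by
  have h := coeff_mul_plucker (σ := σ) (c := c) i j k
  rw [hij, hik, mul_zero, mul_zero, add_zero, add_zero] at h
  exact (mul_eq_zero.mp h).resolve_right hjk

lemma isMonomialType_of_plucker_eq_zero [CharP K 2] (h₀₁ : plucker σ c 0 1 = 0)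
    (h₀₂ : plucker σ c 0 2 = 0) (h₁₃ : plucker σ c 1 3 = 0) (h₂₃ : plucker σ c 2 3 = 0)
    (hw : crossCoeff σ c ≠ 0) : IsMonomialType σ c := by
  have hrel := plucker_relation (σ := σ) (c := c)
  rw [h₀₁, h₀₂, zero_mul, zero_mul, zero_add, zero_add] at hrel
  rcases mul_eq_zero.mp hrel with h₀₃ | h₁₂
  · rw [crossCoeff, h₀₃, zero_add] at hw
    refine .inr ⟨coeff_eq_zero_of_plucker h₀₁ h₀₂ hw,
      coeff_eq_zero_of_plucker ((plucker_comm 3 1).trans h₁₃) ((plucker_comm 3 2).trans h₂₃) hw, ?_⟩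
    exact fun h => hw (CharTwo.add_eq_zero.mpr h)
  · rw [crossCoeff, h₁₂, add_zero] at hw
    refine .inl ⟨coeff_eq_zero_of_plucker ((plucker_comm 1 0).trans h₀₁) h₁₃ hw,
      coeff_eq_zero_of_plucker ((plucker_comm 2 0).trans h₀₂) h₂₃ hw, ?_⟩
    exact fun h => hw (CharTwo.add_eq_zero.mpr h)

variable [Fintype K] [CharP K 2] {m : ℕ} (hcard : Fintype.card K = 2 ^ (2 * m))
  (hσ : ∀ x, σ x = x ^ 2 ^ m)
include hcard hσ

lemma isMonomialType_of_hasTrivialPolarKernel (hm : 4 ≤ m)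
    (hker : HasTrivialPolarKernel (cubic σ c)) (h₀₂ : plucker σ c 0 2 = 0) :
    IsMonomialType σ c := by
  have hσσ := conj_involutive hcard hσ
  have h₁₃ : plucker σ c 1 3 = 0 := by
    simpa only [conj_plucker hσσ, Fin.reduceRev, map_zero] using congrArg σ h₀₂
  have hw : crossCoeff σ c ≠ 0 := by
    simpa [transvectant, h₀₂, h₁₃] using transvectant_one_one_ne_zero hcard hσ hm hker
  have h₀₁ : plucker σ c 0 1 = σ (plucker σ c 2 3) := by
    simp only [conj_plucker hσσ, Fin.reduceRev]
  have h₂₃ : plucker σ c 2 3 = 0 := by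
    refine (mul_eq_zero.mp (plucker_mul_plucker_eq_zero hcard hσ hm hker h₀₂ hw)).elim id ?_
    intro h₁₂
    have hrel := plucker_relation (σ := σ) (c := c)
    rw [h₀₂, h₁₂, zero_mul, mul_zero, add_zero, add_zero, h₀₁] at hrel
    exact (mul_eq_zero.mp hrel).elim (map_eq_zero σ).mp id
  exact isMonomialType_of_plucker_eq_zero (by rw [h₀₁, h₂₃, map_zero]) h₀₂ h₁₃ h₂₃ hw

end Classification

section Normalization

/-- The coefficients of the twisted cubic `c` after the substitution `x ↦ x + σ(v) σ(x)`, in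
characteristic two. -/
def shear (σ : K →+* K) (c : Fin 4 → K) (v : K) : Fin 4 → K :=
  ![c 0 + c 1 * v + c 2 * v ^ 2 + c 3 * v ^ 3,
    c 0 * σ v + c 1 + c 2 * σ v * v ^ 2 + c 3 * v ^ 2,
    c 0 * σ v ^ 2 + c 1 * σ v ^ 2 * v + c 2 + c 3 * v,
    c 0 * σ v ^ 3 + c 1 * σ v ^ 2 + c 2 * σ v + c 3]

/-- The additive map `z ↦ a z + b σ(z)`. -/
def conjLinear (σ : K →+* K) (a b : K) : K →+ K :=
  AddMonoidHom.mulLeft a + (AddMonoidHom.mulLeft b).comp σ.toAddMonoidHom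

variable {σ : K →+* K} {c : Fin 4 → K}

lemma conjLinear_apply (a b z : K) : conjLinear σ a b z = a * z + b * σ z := rfl

lemma conjLinear_injective (hσσ : Involutive σ) {a b : K} (hab : a * σ a ≠ b * σ b) :
    Injective (conjLinear σ a b) := by
  refine (injective_iff_map_eq_zero _).mpr fun z hz => ?_
  rw [conjLinear_apply] at hz
  have hσz := congrArg σ hz
  simp only [map_add, map_mul, hσσ _, map_zero] at hσz
  refine (mul_eq_zero.mp ?_).resolve_right (sub_ne_zero.mpr hab)
  linear_combination σ a * hz - b * hσz

lemma conjLinear_one_conj_injective (hσσ : Involutive σ) {v : K} (hv : v * σ v ≠ 1) :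
    Injective (conjLinear σ 1 (σ v)) :=
  conjLinear_injective hσσ <| by rwa [map_one, one_mul, hσσ, mul_comm, ne_comm]

variable [CharP K 2]

lemma cubic_shear (hσσ : Involutive σ) (v : K) :
    cubic σ (shear σ c v) = cubic σ c ∘ conjLinear σ 1 (σ v) := by
  funext x
  simp only [cubic, shear, comp_apply, conjLinear_apply, map_add, map_mul, map_one, hσσ _,
    Matrix.cons_val]
  grind

lemma plucker_shear_zero_two (hσσ : Involutive σ) (v : K) :
    plucker σ (shear σ c v) 0 2 = (1 + v * σ v) ^ 2 * transvectant σ c 1 v := by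
  simp only [transvectant, crossCoeff, plucker, shear, Fin.reduceRev, map_add, map_mul, map_pow,
    hσσ _, Matrix.cons_val]
  grind

variable [Fintype K] {m : ℕ} (hcard : Fintype.card K = 2 ^ (2 * m)) (hσ : ∀ x, σ x = x ^ 2 ^ m)
include hcard hσ

lemma exists_quadratic_eq_zero (p : K) {w : K} (hw : σ w = w) :
    ∃ v : K, p + w * v + σ p * v ^ 2 = 0 := by
  rcases eq_or_ne p 0 with rfl | hp
  · exact ⟨0, by simp⟩
  have hσp : σ p ≠ 0 := (map_ne_zero σ).mpr hp
  rcases eq_or_ne w 0 with rfl | hw0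
  · obtain ⟨v, hv⟩ := exists_sq_eq (p / σ p)
    exact ⟨v, by rw [hv, mul_div_cancel₀ p hσp, zero_mul, add_zero, CharTwo.add_self_eq_zero]⟩
  · have htrace : truncTrace (2 * m) (p * σ p / w ^ 2) = 0 := by
      rw [truncTrace_two_mul hσ, map_div₀, map_mul, map_pow, conj_involutive hcard hσ, hw,
        mul_comm, CharTwo.add_self_eq_zero]
    obtain ⟨y, hy⟩ := exists_sq_add_self_eq hcard htrace
    refine ⟨w * y / σ p, ?_⟩
    field_simp at hy ⊢
    grind

lemma exists_transvectant_one_eq_zero (hm : 4 ≤ m) (hker : HasTrivialPolarKernel (cubic σ c)) :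
    ∃ v : K, v * σ v ≠ 1 ∧ transvectant σ c 1 v = 0 := by
  have hσσ := conj_involutive hcard hσ
  obtain ⟨v, hv⟩ := exists_quadratic_eq_zero hcard hσ (plucker σ c 0 2)
    (conj_crossCoeff (c := c) hσσ)
  simp only [conj_plucker hσσ, Fin.reduceRev] at hv
  have htr : transvectant σ c 1 v = 0 := by rw [transvectant]; linear_combination hv
  refine ⟨v, fun hv1 => ?_, htr⟩
  obtain ⟨x, hx, hσx⟩ := exists_conj_eq_mul hv1
  refine transvectant_conj_ne_zero hcard hσ hm hker hx ?_
  rw [hσx, transvectant]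
  linear_combination x ^ 2 * hv

theorem exists_shear_isMonomialType (hm : 4 ≤ m) (hker : HasTrivialPolarKernel (cubic σ c)) :
    ∃ v : K, v * σ v ≠ 1 ∧ IsMonomialType σ (shear σ c v) := by
  have hσσ := conj_involutive hcard hσ
  obtain ⟨v, hv, htr⟩ := exists_transvectant_one_eq_zero hcard hσ hm hker
  refine ⟨v, hv, isMonomialType_of_hasTrivialPolarKernel hcard hσ hm ?_ ?_⟩
  · rw [cubic_shear hσσ]
    exact hker.comp_addMonoidHom (conjLinear_one_conj_injective hσσ hv)
  · rw [plucker_shear_zero_two hσσ, htr, mul_zero]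

end Normalization

section AffineEquivalence

lemma isAffinePerm_of_injective [Finite K] {L : K →+ K} (hL : Injective L) : IsAffinePerm L :=
  ⟨Finite.injective_iff_bijective.mp hL, fun x y => by rw [map_zero, add_zero, map_add]⟩

lemma affEquiv_of_comp_eq [Finite K] {f g : K → K} {L M : K →+ K} (hL : Injective L)
    (hM : Injective M) (h : ∀ x, f (M x) = L (g x)) : AffEquiv f g := by
  let e := AddEquiv.ofBijective L (Finite.injective_iff_bijective.mp hL)
  refine ⟨e.symm, M, isAffinePerm_of_injective (L := e.symm.toAddMonoidHom) e.symm.injective,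
    isAffinePerm_of_injective hM, fun x => ?_⟩
  rw [h]
  exact (e.symm_apply_apply (g x)).symm

lemma sq_pow_two_pow_pred_add_one {m : ℕ} (hm : m ≠ 0) (x : K) :
    (x ^ (2 ^ (m - 1) + 1)) ^ 2 = x ^ 2 * x ^ 2 ^ m := by
  rw [← pow_mul, ← pow_add, add_mul, pow_sub_one_mul hm, one_mul, add_comm]

variable [CharP K 2] {m : ℕ} {σ : K →+* K} {c : Fin 4 → K}

lemma IsMonomialType.affEquiv [Finite K] (hc : IsMonomialType σ c) (hσσ : Involutive σ)
    (hσ : ∀ x, σ x = x ^ 2 ^ m) (hm : m ≠ 0) {f : K → K} {M : K →+ K} (hM : Injective M)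
    (hf : ∀ x, f (M x) = cubic σ c x) :
    AffEquiv f (fun x => x ^ 3) ∨ AffEquiv f (fun x => x ^ (2 ^ (m - 1) + 1)) := by
  refine hc.imp (fun ⟨h₁, h₂, hne⟩ => ?_) fun ⟨h₀, h₃, hne⟩ => ?_
  · refine affEquiv_of_comp_eq (conjLinear_injective hσσ hne) hM fun x => ?_
    rw [hf, cubic, h₁, h₂, conjLinear_apply, map_pow]
    ring
  · refine affEquiv_of_comp_eq (L := (conjLinear σ (c 1) (c 2)).comp (frobenius K 2).toAddMonoidHom)
      ((conjLinear_injective hσσ hne).comp (frobenius_inj K 2)) hM fun x => ?_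
    rw [hf, cubic, h₀, h₃, AddMonoidHom.comp_apply, RingHom.toAddMonoidHom_eq_coe,
      AddMonoidHom.coe_coe, frobenius_def, sq_pow_two_pow_pred_add_one hm, ← hσ, conjLinear_apply,
      map_mul, map_pow, hσσ]
    ring

theorem affEquiv_of_isAPN_cubic [Fintype K] (hcard : Fintype.card K = 2 ^ (2 * m))
    (hσ : ∀ x, σ x = x ^ 2 ^ m) (hm : 4 ≤ m) (hf : IsAPN (cubic σ c)) :
    AffEquiv (cubic σ c) (fun x => x ^ 3) ∨
      AffEquiv (cubic σ c) (fun x => x ^ (2 ^ (m - 1) + 1)) := by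
  have hσσ := conj_involutive hcard hσ
  have hker := hasTrivialPolarKernel_of_isAPN (by simp [cubic]) hf
  obtain ⟨v, hv, hmono⟩ := exists_shear_isMonomialType hcard hσ hm hker
  exact hmono.affEquiv hσσ hσ (by lia) (conjLinear_one_conj_injective hσσ hv)
    fun x => (congrFun (cubic_shear hσσ v) x).symm

end AffineEquivalence

end KimAPN

open KimAPN in
theorem kim_type_APN_affine_equiv_Gold_general
    (m : ℕ) (hm : 4 ≤ m) (F : Type*) [Field F] [Fintype F]
    (hcard : Fintype.card F = 2 ^ (2 * m))
    (a₀ a₁ a₂ a₃ : F) (f : F → F)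
    (hf : ∀ x : F, f x = a₀ * x ^ (3 * 2 ^ m) + a₁ * x ^ (2 * 2 ^ m + 1)
        + a₂ * x ^ (2 ^ m + 2) + a₃ * x ^ 3)
    (hAPN : IsAPN f) :
    AffEquiv f (fun x : F => x ^ 3) ∨ AffEquiv f (fun x : F => x ^ (2 ^ (m - 1) + 1)) := by
  have : CharP F 2 := charP_of_card_eq_prime_pow hcard
  have hcubic : f = cubic (iterateFrobenius F 2 m) ![a₃, a₂, a₁, a₀] := by
    funext x
    simp only [hf, cubic, iterateFrobenius_def, Matrix.cons_val]
    ring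
  subst hcubic
  exact affEquiv_of_isAPN_cubic hcard (iterateFrobenius_def 2 m) hm hAPN

/-- Kim-type APN functions on `𝔽_{q²}`, `q = 2^m`, `m ≥ 4`, are affine equivalent to one of the
two Gold functions `x ↦ x³` or `x ↦ x^{2^{m-1}+1}`. -/
theorem kim_type_APN_affine_equiv_Gold
    (m : ℕ) (hm : 4 ≤ m) (F : Type*) [Field F] [Fintype F]
    (hcard : Fintype.card F = 2 ^ (2 * m))
    (a₁ a₂ a₃ : F) (f : F → F)
    (hf : ∀ x : F, f x = x ^ (3 * 2 ^ m) + a₁ * x ^ (2 * 2 ^ m + 1)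
        + a₂ * x ^ (2 ^ m + 2) + a₃ * x ^ 3)
    (hAPN : IsAPN f) :
    AffEquiv f (fun x : F => x ^ 3) ∨ AffEquiv f (fun x : F => x ^ (2 ^ (m - 1) + 1)) :=
  kim_type_APN_affine_equiv_Gold_general m hm F hcard 1 a₁ a₂ a₃ f (by simpa only [one_mul]) hAPN
end

section
/- Let m ≥ 4 be an integer and q = 2^m. Let f : F_{q²} → F_{q²} be given by f(x) = x^{3q} + a₁x^{2q+1} + a₂x^{q+2} + a₃x³ where a₁, a₂, a₃ ∈ F_q (the subfield of order 2^m). If f is APN, then f is affine equivalent to G₁(x) = x³ or f is affine equivalent to G₂(x) = x^{2^{m-1}+1}. -/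
/-!
Write `K = 𝔽_q` and `σ x = x ^ q`. In the coordinates `x` and `x + σ x` the function is a cubic form
`D x³ + A x²(x + σ x) + B x (x + σ x)² + C (x + σ x)³` over `K`. If it is APN then `D ≠ 0`, and a
shear `x ↦ x + ε (x + σ x)` makes `A = B = P`, say, with `C = T`. If `P = T`, the form is a linear
permutation applied to `x³`; if `P + T = D`, a further shear turns it into a linear permutation
applied to `x² σ x`, the square of the second Gold function.

Otherwise put `b² = (P + T) / D` and choose `ω` with `σ ω = ω + 1`. For `x, y, z ∈ K` the points
`(y + z)(x + ω)`, `(x + z)(y + ω)` and `(x + y)(z + ω)` add up to zero, and their images do so as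
soon as the elementary symmetric functions of `x, y, z` satisfy two equations in `b` and `ω² + ω`.
Solving these for distinct `x, y, z` amounts to prescribing the traces of `v` and `c / v` for a
constant `c`, which the first two moments of Kloosterman sums allow when `q ≥ 16`. So the function
is not APN.
-/

section AffineEquivalence

variable {F : Type*} [Field F] {f g h L : F → F}

theorem isAffinePerm_of_bijective {G : Type*} [FunLike G F F] [AddMonoidHomClass G F F] (L : G)
    (hL : Function.Bijective L) : IsAffinePerm L :=
  ⟨hL, fun x y => by rw [map_add, map_zero, add_zero]⟩

theorem isAffinePerm_id : IsAffinePerm (id : F → F) :=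
  isAffinePerm_of_bijective (AddMonoidHom.id F) Function.bijective_id

theorem IsAffinePerm.comp {M : F → F} (hL : IsAffinePerm L) (hM : IsAffinePerm M) :
    IsAffinePerm (L ∘ M) := by
  refine ⟨hL.1.comp hM.1, fun x y => ?_⟩
  have hL₁ := hL.2 (M (x + y)) (M 0)
  have hL₂ := hL.2 (M x) (M y)
  rw [hM.2] at hL₁
  exact hL₁.symm.trans hL₂

theorem IsAffinePerm.of_leftInverse {M : F → F} (hL : IsAffinePerm L)
    (hML : Function.LeftInverse M L) : IsAffinePerm M := by
  have hLM : Function.RightInverse M L := hML.rightInverse_of_surjective hL.1.surjective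
  refine ⟨⟨hLM.injective, hML.surjective⟩, fun x y => hL.1.injective ?_⟩
  have hsum := hL.2 (M (x + y)) (M 0)
  have hsummands := hL.2 (M x) (M y)
  rw [hLM, hLM, add_zero] at hsum
  rw [hLM, hLM, ← hsum] at hsummands
  exact (add_right_cancel hsummands).symm

theorem AffEquiv.symm (hfg : AffEquiv f g) : AffEquiv g f := by
  obtain ⟨L₁, L₂, hL₁, hL₂, hg⟩ := hfg
  obtain ⟨M₁, hM₁, -⟩ := Function.bijective_iff_has_inverse.1 hL₁.1
  obtain ⟨M₂, hM₂, hM₂'⟩ := Function.bijective_iff_has_inverse.1 hL₂.1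
  refine ⟨M₁, M₂, hL₁.of_leftInverse hM₁, hL₂.of_leftInverse hM₂, fun x => ?_⟩
  rw [hg, hM₂', hM₁]

theorem AffEquiv.trans (hfg : AffEquiv f g) (hgh : AffEquiv g h) : AffEquiv f h := by
  obtain ⟨L₁, L₂, hL₁, hL₂, hg⟩ := hfg
  obtain ⟨M₁, M₂, hM₁, hM₂, hh⟩ := hgh
  exact ⟨M₁ ∘ L₁, L₂ ∘ M₂, hM₁.comp hL₁, hL₂.comp hM₂, fun x => by
    rw [hh, hg, Function.comp_apply, Function.comp_apply]⟩

theorem IsAffinePerm.affEquiv_comp_left (hL : IsAffinePerm L) (f : F → F) : AffEquiv f (L ∘ f) :=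
  ⟨L, id, hL, isAffinePerm_id, fun _ => rfl⟩

theorem IsAffinePerm.affEquiv_comp_right (hL : IsAffinePerm L) (f : F → F) : AffEquiv f (f ∘ L) :=
  ⟨id, L, isAffinePerm_id, hL, fun _ => rfl⟩

end AffineEquivalence

section APN

variable {F : Type*} [Field F] {f : F → F}

theorem IsAPN.comp_of_bijective {G : Type*} [FunLike G F F] [AddMonoidHomClass G F F] {L : G}
    (hf : IsAPN f) (hL : Function.Bijective L) : IsAPN (f ∘ L) := by
  intro a ha b
  have hpreimage : {x | (f ∘ L) (x + a) + (f ∘ L) x = b} =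
      L ⁻¹' {y | f (y + L a) + f y = b} := by
    ext x
    simp
  have ha' : L a ≠ 0 := (map_ne_zero_iff L hL.injective).2 ha
  rw [hpreimage, Set.ncard_def, Set.encard_preimage_of_bijective hL]
  exact hf _ ha' b

theorem IsAPN.add_add_ne_zero [Finite F] [CharP F 2] (hf : IsAPN f) (hf0 : f 0 = 0) {x y : F}
    (hx : x ≠ 0) (hy : y ≠ 0) (hxy : x ≠ y) : f x + f y + f (x + y) ≠ 0 := by
  intro hsum
  have hsub : ({0, y, x} : Set F) ⊆ {z | f (z + y) + f z = f y} := by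
    rintro z (rfl | rfl | rfl)
    · simp [hf0]
    · simp [hf0, CharTwo.add_self_eq_zero]
    · change f (z + y) + f z = f y
      linear_combination hsum - CharTwo.add_self_eq_zero (f y)
  have hcard : ({0, y, x} : Set F).ncard = 3 :=
    Set.ncard_eq_three.2 ⟨0, y, x, hy.symm, hx.symm, hxy.symm, rfl⟩
  have hle := (Set.ncard_le_ncard hsub (Set.toFinite _)).trans (hf y hy (f y))
  omega

end APN

section ArtinSchreier

variable {K : Type*} [Field K] [CharP K 2]

variable (K) in
/-- The Artin–Schreier map `u ↦ u² + u` in characteristic two, as an additive endomorphism. -/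
def artinSchreier : K →+ K where
  toFun u := u ^ 2 + u
  map_zero' := by simp
  map_add' x y := by rw [CharTwo.add_sq]; ring

theorem mem_range_artinSchreier {x : K} : x ∈ (artinSchreier K).range ↔ ∃ u : K, u ^ 2 + u = x :=
  Iff.rfl

theorem coe_ker_artinSchreier : ((artinSchreier K).ker : Set K) = {0, 1} := by
  ext x
  change x ^ 2 + x = 0 ↔ x = 0 ∨ x = 1
  rw [sq, ← mul_add_one, mul_eq_zero, CharTwo.add_eq_zero]

theorem index_range_artinSchreier [Finite K] : (artinSchreier K).range.index = 2 := by
  rw [AddSubgroup.index_range]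
  change ((artinSchreier K).ker : Set K).ncard = 2
  rw [coe_ker_artinSchreier, Set.ncard_pair zero_ne_one]

variable [Finite K]

open Classical in
variable (K) in
/-- The additive character of a finite field of characteristic two that is `1` exactly on the image
of the Artin–Schreier map, that is `x ↦ (-1) ^ Tr x` for the absolute trace `Tr`. -/
noncomputable def artinSchreierChar : AddChar K ℤ where
  toFun x := if x ∈ (artinSchreier K).range then 1 else -1
  map_zero_eq_one' := if_pos (zero_mem _)
  map_add_eq_mul' x y := by
    have hadd := AddSubgroup.add_mem_iff_of_index_two (index_range_artinSchreier (K := K))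
      (a := x) (b := y)
    by_cases hx : x ∈ (artinSchreier K).range <;> by_cases hy : y ∈ (artinSchreier K).range <;>
      simp [hadd, hx, hy]

open Classical in
theorem artinSchreierChar_apply (x : K) :
    artinSchreierChar K x = if x ∈ (artinSchreier K).range then 1 else -1 := rfl

theorem artinSchreierChar_eq_one_iff {x : K} :
    artinSchreierChar K x = 1 ↔ ∃ u : K, u ^ 2 + u = x := by
  rw [artinSchreierChar_apply, ← mem_range_artinSchreier]
  split_ifs with hx <;> simp [hx]

theorem artinSchreierChar_eq_one_or_neg_one (x : K) :
    artinSchreierChar K x = 1 ∨ artinSchreierChar K x = -1 := by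
  rw [artinSchreierChar_apply]
  split_ifs <;> simp

theorem artinSchreierChar_eq_neg_one_iff {x : K} :
    artinSchreierChar K x = -1 ↔ ¬ ∃ u : K, u ^ 2 + u = x := by
  rw [← artinSchreierChar_eq_one_iff]
  rcases artinSchreierChar_eq_one_or_neg_one x with hx | hx <;> simp [hx]

theorem artinSchreierChar_ne_one : artinSchreierChar K ≠ 1 := by
  intro hone
  have htop : (artinSchreier K).range = ⊤ := (AddSubgroup.eq_top_iff' _).2 fun x =>
    artinSchreierChar_eq_one_iff.1 (by rw [hone, AddChar.one_apply])
  have hindex := index_range_artinSchreier (K := K)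
  rw [htop, AddSubgroup.index_top] at hindex
  exact absurd hindex (by norm_num)

theorem artinSchreierChar_sq (x : K) : artinSchreierChar K (x ^ 2) = artinSchreierChar K x := by
  have hmul : artinSchreierChar K (x ^ 2) * artinSchreierChar K x = 1 := by
    rw [← AddChar.map_add_eq_mul]
    exact artinSchreierChar_eq_one_iff.2 ⟨x, rfl⟩
  rcases artinSchreierChar_eq_one_or_neg_one x with hx | hx <;> rw [hx] at hmul ⊢ <;> linarith

theorem exists_sq_add_self_eq_or_eq_add {d : K} (hd : ¬ ∃ u : K, u ^ 2 + u = d) (y : K) :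
    (∃ u : K, u ^ 2 + u = y) ∨ ∃ u : K, u ^ 2 + u = y + d := by
  rw [← artinSchreierChar_eq_neg_one_iff] at hd
  simp only [← artinSchreierChar_eq_one_iff, AddChar.map_add_eq_mul, hd]
  rcases artinSchreierChar_eq_one_or_neg_one y with hy | hy <;> simp [hy]

end ArtinSchreier

section KloostermanSum

variable {K R : Type*} [Field K] [Fintype K] [CommRing R]

/-- The Kloosterman sum of an additive character `ψ` at `c`. Since `0⁻¹ = 0`, the sum includes the
term `1` at `v = 0`. -/
def kloostermanSum (ψ : AddChar K R) (c : K) : R := ∑ v : K, ψ (v + c * v⁻¹)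

theorem sum_mul_eq_zero_of_ne_one [IsDomain R] {ψ : AddChar K R} (hψ : ψ ≠ 1) {c : K}
    (hc : c ≠ 0) : ∑ v : K, ψ (v * c) = 0 := by
  classical
  rw [AddChar.sum_mulShift c (AddChar.IsPrimitive.of_ne_one hψ), if_neg hc, Nat.cast_zero]

theorem sum_mul_inv_eq_zero_of_ne_one [IsDomain R] {ψ : AddChar K R} (hψ : ψ ≠ 1) {c : K}
    (hc : c ≠ 0) : ∑ v : K, ψ (c * v⁻¹) = 0 := by
  rw [← sum_mul_eq_zero_of_ne_one hψ hc, ← Equiv.sum_comp (Equiv.inv K)]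
  simp [mul_comm]

theorem sum_kloostermanSum [IsDomain R] {ψ : AddChar K R} (hψ : ψ ≠ 1) :
    ∑ c : K, kloostermanSum ψ c = Fintype.card K := by
  simp only [kloostermanSum, AddChar.map_add_eq_mul]
  rw [Finset.sum_comm, Finset.sum_eq_single 0]
  · simp
  · intro v _ hv
    rw [← Finset.mul_sum, sum_mul_eq_zero_of_ne_one hψ (inv_ne_zero hv), mul_zero]
  · simp

theorem sum_kloostermanSum_sq [CharP K 2] [IsDomain R] {ψ : AddChar K R} (hψ : ψ ≠ 1) :
    ∑ c : K, kloostermanSum ψ c ^ 2 = (Fintype.card K : R) ^ 2 := by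
  have hexpand (c : K) : kloostermanSum ψ c ^ 2 =
      ∑ v : K, ∑ w : K, ψ (v + w) * ψ (c * (v⁻¹ + w⁻¹)) := by
    rw [sq, kloostermanSum, Finset.sum_mul_sum]
    simp only [← AddChar.map_add_eq_mul]
    refine Finset.sum_congr rfl fun v _ => Finset.sum_congr rfl fun w _ => congrArg ψ ?_
    ring
  have horthogonal (v : K) : ∑ w : K, ∑ c : K, ψ (v + w) * ψ (c * (v⁻¹ + w⁻¹)) =
      Fintype.card K := by
    rw [Finset.sum_eq_single v]
    · simp [CharTwo.add_self_eq_zero]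
    · intro w _ hwv
      rw [← Finset.mul_sum, sum_mul_eq_zero_of_ne_one hψ, mul_zero]
      rwa [Ne, CharTwo.add_eq_zero, inv_inj, eq_comm]
    · simp
  calc ∑ c : K, kloostermanSum ψ c ^ 2
      = ∑ v : K, ∑ w : K, ∑ c : K, ψ (v + w) * ψ (c * (v⁻¹ + w⁻¹)) := by
        simp only [hexpand]
        rw [Finset.sum_comm]
        exact Finset.sum_congr rfl fun v _ => Finset.sum_comm
    _ = (Fintype.card K : R) ^ 2 := by simp [horthogonal, sq]

theorem sum_finset_kloostermanSum_sq_le [CharP K 2] {ψ : AddChar K ℤ} (hψ : ψ ≠ 1)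
    (s : Finset K) : ∑ c ∈ s, kloostermanSum ψ c ^ 2 ≤ (Fintype.card K : ℤ) ^ 2 := by
  rw [← sum_kloostermanSum_sq hψ]
  exact Finset.sum_le_sum_of_subset_of_nonneg (Finset.subset_univ s) fun _ _ _ => sq_nonneg _

theorem kloostermanSum_ne_neg_card [CharP K 2] {ψ : AddChar K ℤ} (hψ : ψ ≠ 1) (c : K) :
    kloostermanSum ψ c ≠ -Fintype.card K := by
  classical
  intro hc
  have hzero (x : K) (hxc : x ≠ c) : kloostermanSum ψ x = 0 := by
    have hle := sum_finset_kloostermanSum_sq_le hψ {x, c}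
    rw [Finset.sum_pair hxc, hc, neg_sq, add_le_iff_nonpos_left] at hle
    exact pow_eq_zero_iff two_ne_zero |>.1 (le_antisymm hle (sq_nonneg _))
  have hsum := sum_kloostermanSum hψ
  rw [Finset.sum_eq_single c (fun x _ => hzero x) (by simp), hc] at hsum
  have hpos : (0 : ℤ) < Fintype.card K := mod_cast Fintype.card_pos
  linarith

variable [CharP K 2]

theorem kloostermanSum_artinSchreierChar_sq (c : K) :
    kloostermanSum (artinSchreierChar K) (c ^ 2) = kloostermanSum (artinSchreierChar K) c := by
  unfold kloostermanSum
  rw [← Equiv.sum_comp (Equiv.ofBijective _ (bijective_frobenius K 2))]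
  refine Finset.sum_congr rfl fun v _ => ?_
  rw [Equiv.ofBijective_apply, frobenius_def, ← artinSchreierChar_sq (v + c * v⁻¹),
    CharTwo.add_sq, mul_pow, inv_pow]

theorem two_mul_kloostermanSum_artinSchreierChar_sq_le {c : K} (hc0 : c ≠ 0) (hc1 : c ≠ 1) :
    2 * kloostermanSum (artinSchreierChar K) c ^ 2 ≤ (Fintype.card K : ℤ) ^ 2 := by
  classical
  have hne : c ≠ c ^ 2 := fun h => hc1 (mul_left_cancel₀ hc0 (by rw [← sq, ← h, mul_one]))
  have hle := sum_finset_kloostermanSum_sq_le (artinSchreierChar_ne_one (K := K)) {c, c ^ 2}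
  rwa [Finset.sum_pair hne, kloostermanSum_artinSchreierChar_sq, ← two_mul] at hle

open Classical in
theorem four_mul_card_artinSchreierChar_eq {c : K} (hc : c ≠ 0) {s t : ℤ} (hs : s = 1 ∨ s = -1)
    (ht : t = 1 ∨ t = -1) :
    4 * (Finset.card {v : K | artinSchreierChar K v = s ∧ artinSchreierChar K (c * v⁻¹) = t} : ℤ) =
      Fintype.card K + s * t * kloostermanSum (artinSchreierChar K) c := by
  have hindicator (v : K) :
      (1 + s * artinSchreierChar K v) * (1 + t * artinSchreierChar K (c * v⁻¹)) =
        if artinSchreierChar K v = s ∧ artinSchreierChar K (c * v⁻¹) = t then 4 else 0 := by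
    rcases artinSchreierChar_eq_one_or_neg_one v with hv | hv <;>
      rcases artinSchreierChar_eq_one_or_neg_one (c * v⁻¹) with hw | hw <;>
      rcases hs with rfl | rfl <;> rcases ht with rfl | rfl <;> simp [hv, hw]
  have hexpand (v : K) :
      (1 + s * artinSchreierChar K v) * (1 + t * artinSchreierChar K (c * v⁻¹)) =
        1 + s * artinSchreierChar K v + t * artinSchreierChar K (c * v⁻¹) +
          s * t * artinSchreierChar K (v + c * v⁻¹) := by
    rw [AddChar.map_add_eq_mul]
    ring
  calc 4 * (Finset.card {v : K | artinSchreierChar K v = s ∧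
          artinSchreierChar K (c * v⁻¹) = t} : ℤ)
      = ∑ v : K, (1 + s * artinSchreierChar K v) * (1 + t * artinSchreierChar K (c * v⁻¹)) := by
        simp only [hindicator]
        rw [← Finset.sum_filter, Finset.sum_const, nsmul_eq_mul, mul_comm]
    _ = Fintype.card K + s * t * kloostermanSum (artinSchreierChar K) c := by
        simp only [hexpand, Finset.sum_add_distrib, ← Finset.mul_sum]
        rw [AddChar.sum_eq_zero_of_ne_one artinSchreierChar_ne_one,
          sum_mul_inv_eq_zero_of_ne_one artinSchreierChar_ne_one hc]
        simp [kloostermanSum]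

end KloostermanSum

section VietaTriple

variable {K : Type*} [Field K] [CharP K 2]

theorem exists_artinSchreierChar_eq_eq [Fintype K] (hK : 16 ≤ Fintype.card K) {c : K}
    (hc0 : c ≠ 0) (hc1 : c ≠ 1) {s t : ℤ} (hs : s = 1 ∨ s = -1) (ht : t = 1 ∨ t = -1) (x : K) :
    ∃ v ≠ x, artinSchreierChar K v = s ∧ artinSchreierChar K (c * v⁻¹) = t := by
  classical
  have hcount := four_mul_card_artinSchreierChar_eq hc0 hs ht
  have hbound := two_mul_kloostermanSum_artinSchreierChar_sq_le hc0 hc1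
  have hK' : (16 : ℤ) ≤ Fintype.card K := mod_cast hK
  have hst : s * t = 1 ∨ s * t = -1 := by
    rcases hs with rfl | rfl <;> rcases ht with rfl | rfl <;> simp
  have hcard : 1 < Finset.card
      {v : K | artinSchreierChar K v = s ∧ artinSchreierChar K (c * v⁻¹) = t} := by
    zify
    rcases hst with hst | hst <;> rw [hst] at hcount <;> nlinarith
  obtain ⟨v, hv, hvx⟩ := Finset.exists_mem_ne hcard x
  exact ⟨v, hvx, (Finset.mem_filter.1 hv).2⟩

theorem exists_artinSchreierChar_eq_neg_one [Finite K] {c : K} (hc : c ≠ 0) :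
    ∃ v : K, artinSchreierChar K v = -1 ∧ artinSchreierChar K (c * v⁻¹) = -1 := by
  classical
  have := Fintype.ofFinite K
  have hcount := four_mul_card_artinSchreierChar_eq hc (Or.inr rfl) (Or.inr rfl)
  by_contra! hempty
  rw [Finset.filter_false_of_mem fun v _ hv => hempty v hv.1 hv.2] at hcount
  refine kloostermanSum_ne_neg_card (artinSchreierChar_ne_one (K := K)) c ?_
  simp only [Finset.card_empty, Nat.cast_zero] at hcount
  linarith

theorem exists_artinSchreierChar_eq_neg [Fintype K] (hK : 16 ≤ Fintype.card K) {b : K}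
    (hb0 : b ≠ 0) (hb1 : b ≠ 1) :
    ∃ e : K, e ≠ b ^ 2 + b ∧ artinSchreierChar K e = -artinSchreierChar K b ∧
      artinSchreierChar K ((b ^ 4 + b ^ 3) * e⁻¹) = -1 := by
  have hb1' : b + 1 ≠ 0 := CharTwo.add_eq_zero.not.2 hb1
  have hc : b ^ 4 + b ^ 3 ≠ 0 := by
    rw [show b ^ 4 + b ^ 3 = b ^ 3 * (b + 1) by ring]
    exact mul_ne_zero (pow_ne_zero 3 hb0) hb1'
  have hrange : artinSchreierChar K (b ^ 2 + b) = 1 := artinSchreierChar_eq_one_iff.2 ⟨b, rfl⟩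
  rcases artinSchreierChar_eq_one_or_neg_one b with hb | hb
  · obtain ⟨e, he, hce⟩ := exists_artinSchreierChar_eq_neg_one hc
    refine ⟨e, ?_, by rw [he, hb], hce⟩
    rintro rfl
    rw [hrange] at he
    norm_num at he
  by_cases hc1 : b ^ 4 + b ^ 3 = 1
  · have hmul : (b ^ 2 + b) * b ^ 2 = 1 := by rw [← hc1]; ring
    have hinv : ((b ^ 2 + b) ^ 2)⁻¹ = (b ^ 2) ^ 2 := by
      rw [← inv_pow, inv_eq_of_mul_eq_one_right hmul]
    refine ⟨(b ^ 2 + b) ^ 2, fun hsq => ?_, ?_, ?_⟩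
    · have hone : b ^ 2 + b = 1 :=
        mul_left_cancel₀ (left_ne_zero_of_mul_eq_one hmul) (by rw [← sq, hsq, mul_one])
      rw [hone, one_mul] at hmul
      exact hb0 (by rwa [hmul, add_eq_left] at hone)
    · rw [artinSchreierChar_sq, hrange, hb, neg_neg]
    · rw [hc1, one_mul, hinv, artinSchreierChar_sq, artinSchreierChar_sq, hb]
  · rw [hb, neg_neg]
    exact exists_artinSchreierChar_eq_eq hK hc hc1 (Or.inl rfl) (Or.inr rfl) _

/-- Fixing `x = r` and `y + z = 1 + g` turns the two conditions into `hg` and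
`y * z = d + g * (r + 1)`; then `t = y / (1 + g)` solves the Artin–Schreier equation `ht`. -/
theorem exists_vieta_triple_of_artinSchreier {b d r g t : K} (hg : g * (r ^ 2 + r + d) = b ^ 2)
    (ht : (1 + g) ^ 2 * (t ^ 2 + t) = d + g * (r + 1)) (hg1 : 1 + g ≠ 0)
    (hgr : g ≠ r ^ 2 + r + d) :
    ∃ x y z : K, x ≠ y ∧ x ≠ z ∧ y ≠ z ∧ x * y + x * z + y * z = x + y + z + d + 1 ∧
      x * y * z = (x + y + z) * d + d + b ^ 2 := by
  have hquot : (r + (1 + g) * t) * (r + (1 + g) * (t + 1)) = g + (r ^ 2 + r + d) := by grind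
  have hroots : (r + (1 + g) * t) * (r + (1 + g) * (t + 1)) ≠ 0 := by
    rwa [hquot, Ne, CharTwo.add_eq_zero]
  refine ⟨r, (1 + g) * t, (1 + g) * (t + 1), ?_, ?_, ?_, ?_, ?_⟩
  · exact CharTwo.add_eq_zero.not.1 (left_ne_zero_of_mul hroots)
  · exact CharTwo.add_eq_zero.not.1 (right_ne_zero_of_mul hroots)
  · simp [hg1]
  · grind
  · grind

theorem vieta_quadratic_identity {b d e r u : K} (hr : r ^ 2 + r + d = e + b ^ 2)
    (hu : u * (u + 1) * e = d * e + b ^ 3 * (b + 1)) :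
    (u * e + b ^ 2 * (r + 1 + b)) * (u * e + b ^ 2 * (r + 1 + b) + e) =
      (e + b ^ 2) * (d * (e + b ^ 2) + b ^ 2 * (r + 1)) := by
  grind

theorem exists_vieta_triple [Fintype K] (hK : 16 ≤ Fintype.card K) {b d : K} (hb0 : b ≠ 0)
    (hb1 : b ≠ 1) (hd : ¬ ∃ u : K, u ^ 2 + u = d) :
    ∃ x y z : K, x ≠ y ∧ x ≠ z ∧ y ≠ z ∧ x * y + x * z + y * z = x + y + z + d + 1 ∧
      x * y * z = (x + y + z) * d + d + b ^ 2 := by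
  have hχd := artinSchreierChar_eq_neg_one_iff.2 hd
  obtain ⟨e, heb, he, hce⟩ := exists_artinSchreierChar_eq_neg hK hb0 hb1
  have he0 : e ≠ 0 := by
    rintro rfl
    simp at hce
  obtain ⟨r, hr⟩ : ∃ r : K, r ^ 2 + r = e + b ^ 2 + d := by
    rw [← artinSchreierChar_eq_one_iff, AddChar.map_add_eq_mul, AddChar.map_add_eq_mul,
      artinSchreierChar_sq, he, hχd]
    rcases artinSchreierChar_eq_one_or_neg_one b with hb | hb <;> simp [hb]
  obtain ⟨u, hu⟩ : ∃ u : K, u ^ 2 + u = d + (b ^ 4 + b ^ 3) * e⁻¹ := by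
    rw [← artinSchreierChar_eq_one_iff, AddChar.map_add_eq_mul, hχd, hce]
    norm_num
  have hrd : r ^ 2 + r + d = e + b ^ 2 := by rw [hr, CharTwo.add_cancel_right]
  have hS : e + b ^ 2 ≠ 0 := fun hS => hd ⟨r, by rw [hr, hS, zero_add]⟩
  have hg1 : 1 + b ^ 2 / (e + b ^ 2) = e / (e + b ^ 2) := by
    field_simp
    grind
  -- This `t` is the substitution that turns the equation for `t` into the one solved by `u`.
  refine exists_vieta_triple_of_artinSchreier (r := r) (g := b ^ 2 / (e + b ^ 2))
    (t := u + b ^ 2 * (r + 1 + b) * e⁻¹) ?_ ?_ ?_ ?_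
  · rw [hrd, div_mul_cancel₀ _ hS]
  · rw [hg1]
    field_simp at hu ⊢
    exact vieta_quadratic_identity hrd hu
  · rw [hg1]
    exact div_ne_zero he0 hS
  · rw [hrd, Ne, div_eq_iff hS, ← sq, CharTwo.sq_inj]
    exact fun h => heb (by grind)

end VietaTriple

section TraceCubic

variable {K F : Type*} [Field K] [Field F] [Algebra K F] (σ : F →ₐ[K] F)

/-- The `K`-linear combination `x ↦ α x + β σ(x)` of the identity and an endomorphism `σ`. The
linear permutations in all affine equivalences between cubic forms below are of this kind. -/
def conjComb (α β : K) : F →ₗ[K] F := α • LinearMap.id + β • σ.toLinearMap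

/-- A cubic form in `x` and `x + σ(x)`, the trace of `x` when `σ` is the conjugation of a quadratic
extension of characteristic two. These coordinates make `conjComb σ (1 + ε) ε` a shear: it sends `x`
to `x + ε (x + σ(x))` and fixes `x + σ(x)`. -/
def traceCubic (D A B C : K) (x : F) : F :=
  D • x ^ 3 + A • (x ^ 2 * (x + σ x)) + B • (x * (x + σ x) ^ 2) + C • (x + σ x) ^ 3

variable {σ} {D A B C P T : K}

theorem conjComb_apply (α β : K) (x : F) : conjComb σ α β x = α • x + β • σ x := rfl

theorem traceCubic_zero : traceCubic σ D A B C 0 = 0 := by simp [traceCubic]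

theorem traceCubic_smul (c : K) (x : F) :
    traceCubic σ D A B C (c • x) = c ^ 3 • traceCubic σ D A B C x := by
  simp only [traceCubic, Algebra.smul_def, map_mul, map_pow, AlgHom.commutes]
  ring

variable [CharP F 2]

theorem traceCubic_one : traceCubic σ D A B C 1 = algebraMap K F D := by
  simp [traceCubic, CharTwo.add_self_eq_zero, Algebra.smul_def]

theorem traceCubic_of_map_eq_add_one {x : F} (hx : σ x = x + 1) :
    traceCubic σ D A B C x = D • x ^ 3 + A • x ^ 2 + B • x + algebraMap K F C := by
  simp [traceCubic, hx, CharTwo.add_cancel_left, Algebra.smul_def]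

theorem conj_cubic_eq_traceCubic (a₀ a₁ a₂ a₃ : K) (x : F) :
    a₀ • σ x ^ 3 + a₁ • (σ x ^ 2 * x) + a₂ • (σ x * x ^ 2) + a₃ • x ^ 3 =
      traceCubic σ (a₀ + a₁ + a₂ + a₃) (a₂ + a₀) (a₁ + a₀) a₀ x := by
  simp only [traceCubic, Algebra.smul_def, map_add]
  grind

theorem conjComb_conjComb (hσ : Function.Involutive σ) (α β : K) (x : F) :
    conjComb σ α β (conjComb σ α β x) = (α + β) ^ 2 • x := by
  simp only [conjComb_apply, Algebra.smul_def, map_add, map_mul, map_pow, AlgHom.commutes, hσ x]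
  grind

theorem bijective_conjComb (hσ : Function.Involutive σ) {α β : K} (hαβ : α + β ≠ 0) :
    Function.Bijective (conjComb σ α β) := by
  have hsmul : Function.Bijective fun x : F => (α + β) ^ 2 • x :=
    MulAction.bijective₀ (pow_ne_zero 2 hαβ)
  have hcomp : conjComb σ α β ∘ conjComb σ α β = fun x : F => (α + β) ^ 2 • x :=
    funext (conjComb_conjComb hσ α β)
  rw [← hcomp] at hsmul
  exact ⟨hsmul.injective.of_comp, hsmul.surjective.of_comp⟩

theorem traceCubic_comp_shear (hσ : Function.Involutive σ) (ε : K) :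
    traceCubic σ D A B C ∘ conjComb σ (1 + ε) ε =
      traceCubic σ D (D * ε + A) (D * ε ^ 2 + B) (D * ε ^ 3 + A * ε ^ 2 + B * ε + C) := by
  funext x
  simp only [Function.comp_apply, traceCubic, conjComb_apply, Algebra.smul_def, map_add, map_mul,
    map_pow, map_one, AlgHom.commutes, hσ x]
  grind

theorem traceCubic_eq_conjComb_cube :
    traceCubic σ D T T T = conjComb σ (D + T) T ∘ fun x => x ^ 3 := by
  funext x
  simp only [Function.comp_apply, traceCubic, conjComb_apply, Algebra.smul_def, map_add, map_pow]
  grind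

theorem traceCubic_eq_conjComb_sq_mul_conj (hσ : Function.Involutive σ) :
    traceCubic σ (A + B) A B 0 = conjComb σ A B ∘ fun x => x ^ 2 * σ x := by
  funext x
  simp only [Function.comp_apply, traceCubic, conjComb_apply, Algebra.smul_def, map_add, map_mul,
    map_pow, map_zero, hσ x]
  grind

theorem bijective_shear (hσ : Function.Involutive σ) (ε : K) :
    Function.Bijective (conjComb σ (1 + ε) ε) := by
  have : CharP K 2 := (algebraMap K F).charP (algebraMap K F).injective 2
  exact bijective_conjComb hσ (by simp [CharTwo.add_self_eq_zero, add_assoc])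

theorem affEquiv_traceCubic_cube (hσ : Function.Involutive σ) (hD : D ≠ 0) :
    AffEquiv (traceCubic σ D T T T) fun x => x ^ 3 := by
  have : CharP K 2 := (algebraMap K F).charP (algebraMap K F).injective 2
  rw [traceCubic_eq_conjComb_cube]
  have hbij : Function.Bijective (conjComb σ (D + T) T) :=
    bijective_conjComb hσ (by rwa [CharTwo.add_cancel_right])
  exact ((isAffinePerm_of_bijective _ hbij).affEquiv_comp_left _).symm

theorem affEquiv_traceCubic_sq_mul_conj (hσ : Function.Involutive σ) (hAB : A + B ≠ 0) :
    AffEquiv (traceCubic σ (A + B) A B 0) fun x => x ^ 2 * σ x := by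
  rw [traceCubic_eq_conjComb_sq_mul_conj hσ]
  exact ((isAffinePerm_of_bijective _ (bijective_conjComb hσ hAB)).affEquiv_comp_left _).symm

theorem affEquiv_traceCubic_shear (hσ : Function.Involutive σ) (ε : K) :
    AffEquiv (traceCubic σ D A B C)
      (traceCubic σ D (D * ε + A) (D * ε ^ 2 + B) (D * ε ^ 3 + A * ε ^ 2 + B * ε + C)) := by
  rw [← traceCubic_comp_shear hσ]
  exact (isAffinePerm_of_bijective _ (bijective_shear hσ ε)).affEquiv_comp_right _

end TraceCubic

section ConjugateOfArtinSchreierRoot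

variable {K F : Type*} [Field K] [Field F] [Algebra K F] {σ : F →ₐ[K] F} {ω : F} {δ : K}

theorem map_algebraMap_add (hω : σ ω = ω + 1) (u : K) :
    σ (algebraMap K F u + ω) = algebraMap K F u + ω + 1 := by
  rw [map_add, AlgHom.commutes, hω, add_assoc]

variable [CharP F 2]

theorem not_exists_sq_add_self_eq (hω : σ ω = ω + 1) (hδ : algebraMap K F δ = ω ^ 2 + ω) :
    ¬ ∃ u : K, u ^ 2 + u = δ := by
  rintro ⟨u, rfl⟩
  have hroots : (ω + algebraMap K F u) * (ω + algebraMap K F (u + 1)) = 0 := by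
    simp only [map_add, map_pow, map_one] at hδ ⊢
    grind
  obtain ⟨v, hv⟩ : ∃ v : K, ω = algebraMap K F v := by
    rcases mul_eq_zero.1 hroots with h | h <;> exact ⟨_, CharTwo.add_eq_zero.1 h⟩
  rw [hv, AlgHom.commutes] at hω
  simp at hω

theorem exists_sq_add_self_eq_or_exists_map_eq_add_one [Finite K] (hω : σ ω = ω + 1)
    (hδ : algebraMap K F δ = ω ^ 2 + ω) (y : K) :
    (∃ u : K, u ^ 2 + u = y) ∨ ∃ x : F, σ x = x + 1 ∧ x ^ 2 + x = algebraMap K F y := by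
  have : CharP K 2 := (algebraMap K F).charP (algebraMap K F).injective 2
  refine (exists_sq_add_self_eq_or_eq_add (not_exists_sq_add_self_eq hω hδ) y).imp_right ?_
  rintro ⟨u, hu⟩
  refine ⟨algebraMap K F u + ω, map_algebraMap_add hω u, ?_⟩
  have hu' : algebraMap K F u ^ 2 + algebraMap K F u = algebraMap K F y + (ω ^ 2 + ω) := by
    rw [← hδ, ← map_pow, ← map_add, ← map_add, hu]
  grind

end ConjugateOfArtinSchreierRoot

section APNTraceCubic

variable {K F : Type*} [Field K] [Field F] [Algebra K F] [CharP F 2] {σ : F →ₐ[K] F}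
  {D A B C P T : K} {ω : F} {δ : K}

theorem add_add_traceCubic_of_map_eq_add_one {x : F} (hx : σ x = x + 1) :
    traceCubic σ D A B C x + traceCubic σ D A B C 1 + traceCubic σ D A B C (x + 1) =
      D • (x ^ 2 + x) + algebraMap K F (A + B) := by
  have hx1 : σ (x + 1) = x + 1 + 1 := by rw [map_add, map_one, hx]
  rw [traceCubic_of_map_eq_add_one hx, traceCubic_of_map_eq_add_one hx1, traceCubic_one]
  simp only [Algebra.smul_def, map_add]
  grind

theorem add_add_traceCubic_polarised (hω : σ ω = ω + 1) (x y z : K) :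
    traceCubic σ D P P T ((y + z) • (algebraMap K F x + ω)) +
        traceCubic σ D P P T ((x + z) • (algebraMap K F y + ω)) +
        traceCubic σ D P P T ((x + y) • (algebraMap K F z + ω)) =
      ((x + y) * (x + z) * (y + z)) • (D • ω ^ 3 + P • (ω ^ 2 + ω) + algebraMap K F T +
        (x + y + z) • (D • ω ^ 2 + algebraMap K F P) +
        (x * y + x * z + y * z) • (D • ω + algebraMap K F P) +
        algebraMap K F (x * y * z * D)) := by
  simp only [traceCubic_smul, traceCubic_of_map_eq_add_one (map_algebraMap_add hω _)]
  simp only [Algebra.smul_def, map_add, map_mul, map_pow]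
  grind

variable [Finite F]

theorem traceCubic_ne_zero_of_isAPN [Fintype K] (hK : 2 < Fintype.card K)
    (hf : IsAPN (traceCubic σ D A B C)) {x : F} (hx : x ≠ 0) : traceCubic σ D A B C x ≠ 0 := by
  classical
  obtain ⟨c, -, hc⟩ := Finset.exists_mem_notMem_of_card_lt_card
    (s := {(0 : K), 1}) (t := Finset.univ) (Finset.card_le_two.trans_lt hK)
  obtain ⟨hc0, hc1⟩ : c ≠ 0 ∧ c ≠ 1 := by simpa using hc
  intro hzero
  refine hf.add_add_ne_zero traceCubic_zero (smul_ne_zero hc0 hx) hx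
    (fun hcx => hc1 (smul_left_injective K hx (by simpa using hcx))) ?_
  rw [show c • x + x = (c + 1) • x by rw [add_smul, one_smul], traceCubic_smul, traceCubic_smul,
    hzero, smul_zero, smul_zero, add_zero, add_zero]

theorem leadingCoeff_ne_zero_of_isAPN [Fintype K] (hK : 2 < Fintype.card K)
    (hf : IsAPN (traceCubic σ D A B C)) : D ≠ 0 := by
  rintro rfl
  exact traceCubic_ne_zero_of_isAPN hK hf one_ne_zero (by rw [traceCubic_one, map_zero])

theorem exists_shear_of_isAPN (hω : σ ω = ω + 1) (hδ : algebraMap K F δ = ω ^ 2 + ω)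
    (hD : D ≠ 0) (hf : IsAPN (traceCubic σ D A B C)) :
    ∃ ε : K, D * ε + A = D * ε ^ 2 + B := by
  have : CharP K 2 := (algebraMap K F).charP (algebraMap K F).injective 2
  have : Finite K := Finite.of_injective _ (algebraMap K F).injective
  rcases exists_sq_add_self_eq_or_exists_map_eq_add_one hω hδ ((A + B) / D) with
    ⟨ε, hε⟩ | ⟨x, hx, hxAB⟩
  · rw [eq_div_iff hD] at hε
    exact ⟨ε, by grind⟩
  · have hx0 : x ≠ 0 := by
      rintro rfl
      simp at hx
    have hx1 : x ≠ 1 := by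
      rintro rfl
      simp at hx
    refine absurd ?_ (hf.add_add_ne_zero traceCubic_zero hx0 one_ne_zero hx1)
    rw [add_add_traceCubic_of_map_eq_add_one hx, hxAB, Algebra.smul_def, ← map_mul,
      mul_div_cancel₀ _ hD, CharTwo.add_self_eq_zero]

theorem exists_sq_add_self_eq_one_of_isAPN [Fintype K] (hK : 2 < Fintype.card K)
    (hω : σ ω = ω + 1) (hδ : algebraMap K F δ = ω ^ 2 + ω)
    (hf : IsAPN (traceCubic σ (P + T) P P T)) : ∃ θ : K, θ ^ 2 + θ = 1 := by
  refine (exists_sq_add_self_eq_or_exists_map_eq_add_one hω hδ 1).resolve_right ?_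
  rintro ⟨x, hx, hx1⟩
  have hx0 : x ≠ 0 := by
    rintro rfl
    simp at hx
  refine traceCubic_ne_zero_of_isAPN hK hf hx0 ?_
  rw [traceCubic_of_map_eq_add_one hx]
  simp only [Algebra.smul_def, map_add, map_one] at hx1 ⊢
  grind

theorem not_isAPN_traceCubic [Fintype K] (hK : 16 ≤ Fintype.card K) (hω : σ ω = ω + 1)
    (hδ : algebraMap K F δ = ω ^ 2 + ω) (hD : D ≠ 0) (hPT : P ≠ T) (hPTD : P + T ≠ D) :
    ¬ IsAPN (traceCubic σ D P P T) := by
  intro hf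
  have : CharP K 2 := (algebraMap K F).charP (algebraMap K F).injective 2
  obtain ⟨b, hb⟩ := (bijective_frobenius K 2).surjective ((P + T) / D)
  rw [frobenius_def, eq_div_iff hD] at hb
  have hb0 : b ≠ 0 := by
    rintro rfl
    exact hPT (CharTwo.add_eq_zero.1 (by rw [← hb, zero_pow two_ne_zero, zero_mul]))
  have hb1 : b ≠ 1 := by
    rintro rfl
    exact hPTD (by rw [← hb, one_pow, one_mul])
  obtain ⟨x, y, z, hxy, hxz, hyz, he₂, he₃⟩ :=
    exists_vieta_triple hK hb0 hb1 (not_exists_sq_add_self_eq hω hδ)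
  have hadd : (y + z) • (algebraMap K F x + ω) + (x + z) • (algebraMap K F y + ω) =
      (x + y) • (algebraMap K F z + ω) := by
    simp only [Algebra.smul_def, map_add]
    grind
  have hne {u v : K} (huv : u ≠ v) (w : K) : (u + v) • (algebraMap K F w + ω) ≠ 0 := by
    refine smul_ne_zero (CharTwo.add_eq_zero.not.2 huv) fun hw => ?_
    have hσw := map_algebraMap_add hω w
    rw [hw, map_zero] at hσw
    simp at hσw
  refine hf.add_add_ne_zero traceCubic_zero (hne hyz x) (hne hxz y)
    (CharTwo.add_eq_zero.not.1 (hadd ▸ hne hxy z)) ?_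
  rw [hadd, add_add_traceCubic_polarised hω, he₂, he₃]
  refine smul_eq_zero_of_right _ ?_
  have hb' := congrArg (algebraMap K F) hb
  simp only [Algebra.smul_def, map_add, map_mul, map_pow, map_one, hδ] at hb' ⊢
  grind

theorem affEquiv_traceCubic_of_isAPN_of_symm [Fintype K] (hK : 16 ≤ Fintype.card K)
    (hσ : Function.Involutive σ) (hω : σ ω = ω + 1) (hδ : algebraMap K F δ = ω ^ 2 + ω)
    (hf : IsAPN (traceCubic σ D P P T)) :
    AffEquiv (traceCubic σ D P P T) (fun x => x ^ 3) ∨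
      AffEquiv (traceCubic σ D P P T) (fun x => x ^ 2 * σ x) := by
  have : CharP K 2 := (algebraMap K F).charP (algebraMap K F).injective 2
  have hK2 : 2 < Fintype.card K := by omega
  have hD := leadingCoeff_ne_zero_of_isAPN hK2 hf
  by_cases hPT : P = T
  · subst hPT
    exact Or.inl (affEquiv_traceCubic_cube hσ hD)
  by_cases hPTD : P + T = D
  · subst hPTD
    obtain ⟨θ, hθ⟩ := exists_sq_add_self_eq_one_of_isAPN hK2 hω hδ hf
    have hshear := affEquiv_traceCubic_shear (D := P + T) (A := P) (B := P) (C := T) hσ θ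
    have hconst : (P + T) * θ ^ 3 + P * θ ^ 2 + P * θ + T = 0 := by grind
    have hsum : P + T = (P + T) * θ + P + ((P + T) * θ ^ 2 + P) := by grind
    right
    refine hshear.trans ?_
    rw [hconst]
    nth_rw 1 [hsum]
    exact affEquiv_traceCubic_sq_mul_conj hσ (hsum ▸ hD)
  · exact absurd hf (not_isAPN_traceCubic hK hω hδ hD hPT hPTD)

theorem affEquiv_traceCubic_of_isAPN [Fintype K] (hK : 16 ≤ Fintype.card K)
    (hσ : Function.Involutive σ) (hω : σ ω = ω + 1) (hδ : algebraMap K F δ = ω ^ 2 + ω)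
    (hf : IsAPN (traceCubic σ D A B C)) :
    AffEquiv (traceCubic σ D A B C) (fun x => x ^ 3) ∨
      AffEquiv (traceCubic σ D A B C) (fun x => x ^ 2 * σ x) := by
  have hD := leadingCoeff_ne_zero_of_isAPN (by omega) hf
  obtain ⟨ε, hε⟩ := exists_shear_of_isAPN hω hδ hD hf
  have hshear := affEquiv_traceCubic_shear (D := D) (A := A) (B := B) (C := C) hσ ε
  have hf' := hf.comp_of_bijective (bijective_shear hσ ε)
  rw [traceCubic_comp_shear hσ] at hf'
  rw [← hε] at hshear hf'
  exact (affEquiv_traceCubic_of_isAPN_of_symm hK hσ hω hδ hf').imp hshear.trans hshear.trans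

end APNTraceCubic

section FrobeniusConjugation

variable {K F : Type*} [Field K] [Fintype K] [Field F] [Finite F] [Algebra K F]

theorem mem_range_algebraMap_of_pow_card_eq {x : F} (hx : x ^ Fintype.card K = x) :
    x ∈ Set.range (algebraMap K F) := by
  refine (IsGalois.mem_range_algebraMap_iff_fixed x).2 fun τ => ?_
  obtain ⟨n, rfl⟩ := (FiniteField.bijective_frobeniusAlgEquivOfAlgebraic_pow K F).surjective τ
  rw [AlgEquiv.coe_pow]
  exact Function.IsFixedPt.iterate hx n

theorem involutive_frobeniusAlgHom (hKF : Module.finrank K F = 2) :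
    Function.Involutive (FiniteField.frobeniusAlgHom K F) := fun x => by
  have hpow := pow_orderOf_eq_one (FiniteField.frobeniusAlgHom K F)
  rw [FiniteField.orderOf_frobeniusAlgHom, hKF, sq] at hpow
  exact DFunLike.congr_fun hpow x

theorem exists_frobeniusAlgHom_eq_add_one [CharP F 2] (hKF : Module.finrank K F = 2) :
    ∃ ω : F, FiniteField.frobeniusAlgHom K F ω = ω + 1 := by
  set σ := FiniteField.frobeniusAlgHom K F
  have hne : σ ≠ 1 := by
    rw [Ne, ← orderOf_eq_one_iff, FiniteField.orderOf_frobeniusAlgHom, hKF]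
    norm_num
  obtain ⟨x, hx⟩ := DFunLike.ne_iff.1 hne
  have htrace : x + σ x ≠ 0 := fun h => hx (CharTwo.add_eq_zero.1 h).symm
  have hfixed : σ (x + σ x) = x + σ x := by
    rw [map_add, involutive_frobeniusAlgHom hKF, add_comm]
  refine ⟨x / (x + σ x), ?_⟩
  rw [map_div₀, hfixed]
  field_simp
  rw [← add_assoc, CharTwo.add_self_eq_zero, zero_add]

theorem affEquiv_conj_cubic_of_isAPN [CharP F 2] (hK : 16 ≤ Fintype.card K)
    (hKF : Module.finrank K F = 2) {f : F → F} (a₀ a₁ a₂ a₃ : K)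
    (hf : ∀ x, f x = a₀ • (x ^ Fintype.card K) ^ 3 + a₁ • ((x ^ Fintype.card K) ^ 2 * x) +
      a₂ • (x ^ Fintype.card K * x ^ 2) + a₃ • x ^ 3) (hAPN : IsAPN f) :
    AffEquiv f (fun x => x ^ 3) ∨ AffEquiv f (fun x => x ^ 2 * x ^ Fintype.card K) := by
  obtain ⟨ω, hω⟩ := exists_frobeniusAlgHom_eq_add_one hKF
  obtain ⟨δ, hδ⟩ : ω ^ 2 + ω ∈ Set.range (algebraMap K F) := by
    refine mem_range_algebraMap_of_pow_card_eq ?_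
    change FiniteField.frobeniusAlgHom K F (ω ^ 2 + ω) = ω ^ 2 + ω
    rw [map_add, map_pow, hω]
    grind
  obtain rfl : f = traceCubic (FiniteField.frobeniusAlgHom K F) (a₀ + a₁ + a₂ + a₃) (a₂ + a₀)
      (a₁ + a₀) a₀ := by
    funext x
    rw [hf, ← conj_cubic_eq_traceCubic, FiniteField.coe_frobeniusAlgHom]
  exact affEquiv_traceCubic_of_isAPN hK (involutive_frobeniusAlgHom hKF) hω hδ hAPN

end FrobeniusConjugation

theorem nonempty_galoisField_ringHom {F : Type*} [Field F] [Fintype F] {p m n : ℕ}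
    [Fact p.Prime] (hm : m ≠ 0) (hmn : m ∣ n) (hcard : Fintype.card F = p ^ n) :
    Nonempty (GaloisField p m →+* F) := by
  have : CharP F p := charP_of_card_eq_prime_pow hcard
  let := ZMod.algebra F p
  have hfinrank : Module.finrank (ZMod p) F = n :=
    Nat.pow_right_injective (Fact.out : p.Prime).two_le
      ((FiniteField.pow_finrank_eq_card p F).trans hcard)
  obtain ⟨φ⟩ := FiniteField.nonempty_algHom_of_finrank_dvd (F := ZMod p) (K := GaloisField p m)
    (L := F) (by rwa [GaloisField.finrank p hm, hfinrank])
  exact ⟨φ.toRingHom⟩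

theorem affEquiv_sq_mul_pow_gold {F : Type*} [Field F] [Finite F] [CharP F 2] {m : ℕ}
    (hm : m ≠ 0) :
    AffEquiv (fun x : F => x ^ 2 * x ^ 2 ^ m) (fun x : F => x ^ (2 ^ (m - 1) + 1)) := by
  have hfrobenius : (fun x : F => x ^ 2 * x ^ 2 ^ m) =
      frobenius F 2 ∘ fun x => x ^ (2 ^ (m - 1) + 1) := by
    funext x
    rw [Function.comp_apply, frobenius_def, ← pow_mul, ← pow_add, add_mul, one_mul,
      pow_sub_one_mul hm, add_comm]
  rw [hfrobenius]
  exact ((isAffinePerm_of_bijective _ (bijective_frobenius F 2)).affEquiv_comp_left _).symm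

theorem kim_type_APN_subfield_coeffs_affine_equiv_Gold_general
    (m : ℕ) (hm : 4 ≤ m) (F : Type*) [Field F] [Fintype F]
    (hcard : Fintype.card F = 2 ^ (2 * m))
    (a₀ a₁ a₂ a₃ : F) (ha₀ : a₀ ^ (2 ^ m) = a₀)
    (ha₁ : a₁ ^ (2 ^ m) = a₁) (ha₂ : a₂ ^ (2 ^ m) = a₂) (ha₃ : a₃ ^ (2 ^ m) = a₃)
    (f : F → F)
    (hf : ∀ x : F, f x = a₀ * x ^ (3 * 2 ^ m) + a₁ * x ^ (2 * 2 ^ m + 1)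
        + a₂ * x ^ (2 ^ m + 2) + a₃ * x ^ 3)
    (hAPN : IsAPN f) :
    AffEquiv f (fun x : F => x ^ 3) ∨ AffEquiv f (fun x : F => x ^ (2 ^ (m - 1) + 1)) := by
  have hm0 : m ≠ 0 := by omega
  have : CharP F 2 := charP_of_card_eq_prime_pow hcard
  obtain ⟨φ⟩ := nonempty_galoisField_ringHom hm0 (Dvd.intro_left 2 rfl) hcard
  let := φ.toAlgebra
  let := Fintype.ofFinite (GaloisField 2 m)
  have hK : Fintype.card (GaloisField 2 m) = 2 ^ m := by
    rw [← Nat.card_eq_fintype_card, GaloisField.card 2 m hm0]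
  have hKF : Module.finrank (GaloisField 2 m) F = 2 := by
    refine Nat.pow_right_injective (Nat.le_self_pow hm0 2) ?_
    dsimp only
    rw [← hK, ← Module.card_eq_pow_finrank, hcard, hK, ← pow_mul, mul_comm]
  have hmem {a : F} (ha : a ^ 2 ^ m = a) : a ∈ Set.range (algebraMap (GaloisField 2 m) F) :=
    mem_range_algebraMap_of_pow_card_eq (by rwa [hK])
  obtain ⟨c₀, rfl⟩ := hmem ha₀
  obtain ⟨c₁, rfl⟩ := hmem ha₁
  obtain ⟨c₂, rfl⟩ := hmem ha₂
  obtain ⟨c₃, rfl⟩ := hmem ha₃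
  refine (affEquiv_conj_cubic_of_isAPN (hK ▸ Nat.pow_le_pow_right two_pos hm) hKF c₀ c₁ c₂ c₃
    (fun x => ?_) hAPN).imp_right fun h => (hK ▸ h).trans (affEquiv_sq_mul_pow_gold hm0)
  rw [hf, hK]
  simp only [Algebra.smul_def]
  ring

/-- Kim-type APN functions on `𝔽_{q²}` with coefficients in the subfield `𝔽_q`, `q = 2^m`,
`m ≥ 4`, are affine equivalent to one of the Gold functions `x ↦ x³` or `x ↦ x^{2^{m-1}+1}`.
Membership of `a` in the subfield `𝔽_q` is expressed as `a ^ (2^m) = a`. -/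
theorem kim_type_APN_subfield_coeffs_affine_equiv_Gold
    (m : ℕ) (hm : 4 ≤ m) (F : Type*) [Field F] [Fintype F]
    (hcard : Fintype.card F = 2 ^ (2 * m))
    (a₁ a₂ a₃ : F)
    (ha₁ : a₁ ^ (2 ^ m) = a₁) (ha₂ : a₂ ^ (2 ^ m) = a₂) (ha₃ : a₃ ^ (2 ^ m) = a₃)
    (f : F → F)
    (hf : ∀ x : F, f x = x ^ (3 * 2 ^ m) + a₁ * x ^ (2 * 2 ^ m + 1)
        + a₂ * x ^ (2 ^ m + 2) + a₃ * x ^ 3)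
    (hAPN : IsAPN f) :
    AffEquiv f (fun x : F => x ^ 3) ∨ AffEquiv f (fun x : F => x ^ (2 ^ (m - 1) + 1)) :=
  kim_type_APN_subfield_coeffs_affine_equiv_Gold_general m hm F hcard 1 a₁ a₂ a₃ (one_pow _)
    ha₁ ha₂ ha₃ f (fun x => by rw [hf, one_mul]) hAPN
end
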